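/- arXiv:1808.05299 — 4 statements merged into one kernel-verified Lean document; each statement's English description precedes it below -/
import Mathlib

section
/- The set (F′)^δ = {f ∈ F′ : δ(f) = 0} is a finitely generated module over the ring S^δ = ker δ_S (acting via the S-module structure of F′). -/
open MvPolynomial

namespace Stmt7

/-- Index type for `{1, …, 2d}`: `(i, 0)` stands for `2i-1` and `(i, 1)` for `2i`. -/
abbrev ι (d : ℕ) : Type := Fin d × Fin 2

/-- The free unital associative algebra `P = K⟨x_1, …, x_{2d}⟩`. -/
abbrev P (K : Type) [Field K] (d : ℕ) : Type := FreeAlgebra K (ι d)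

/-- The relation whose `RingQuot` is the free metabelian associative algebra
`F = P/T`, `T` being the two-sided ideal generated by all `[a,b][c,e]`. -/
def metaRel (K : Type) [Field K] (d : ℕ) : P K d → P K d → Prop := fun p q =>
  q = 0 ∧ ∃ a b c e : P K d, p = (a * b - b * a) * (c * e - e * c)

/-- The free metabelian associative algebra `F = P/T` of rank `2d`. -/
abbrev F (K : Type) [Field K] (d : ℕ) : Type := RingQuot (metaRel K d)

/-- `x̄_j`, the image in `F` of the free generator `x_j`. -/
noncomputable def xb (K : Type) [Field K] (d : ℕ) (j : ι d) : F K d :=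
  RingQuot.mkAlgHom K (metaRel K d) (FreeAlgebra.ι K j)

/-- The commutator ideal `F'` of `F` (image of the two-sided ideal of `P` generated by
all commutators `[a,b]`), as a `K`-subspace of `F`: it is spanned by all `a[b,c]e`. -/
noncomputable def F' (K : Type) [Field K] (d : ℕ) : Submodule K (F K d) :=
  Submodule.span K {p : F K d | ∃ a b c e : F K d, p = a * (b * c - c * b) * e}

/-- The polynomial ring `S = K[u_1, …, u_{2d}, v_1, …, v_{2d}]`; the variable
`X (Sum.inl j)` is `u_j` and `X (Sum.inr j)` is `v_j`. -/
abbrev S (K : Type) [Field K] (d : ℕ) : Type := MvPolynomial (ι d ⊕ ι d) K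

set_option linter.unusedSectionVars false
set_option linter.unusedSimpArgs false

structure Good {K V : Type} [Field K] [AddCommGroup V] [Module K V]
    (e f h : Module.End K V) : Prop where
  ef : ∀ v, e (f v) = f (e v) + h v
  he : ∀ v, h (e v) = e (h v) + (2 : K) • e v
  hf : ∀ v, h (f v) = f (h v) - (2 : K) • f v
  ln_e : ∀ v, ∃ n : ℕ, (e ^ n) v = 0
  ln_f : ∀ v, ∃ n : ℕ, (f ^ n) v = 0
  diag : ⨆ μ : K, Module.End.eigenspace h μ = ⊤

section sl2
variable {K V : Type} [Field K] [CharZero K] [AddCommGroup V] [Module K V]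
  {e f h : Module.End K V}

theorem Good.h_e_pow (G : Good e f h) {v : V} {r : K} (hv : h v = r • v) (k : ℕ) :
    h ((e ^ k) v) = (r + 2 * k) • (e ^ k) v := by
  induction k with
  | zero => simp [hv]
  | succ k ih =>
    rw [pow_succ', Module.End.mul_apply, G.he, ih, map_smul, ← add_smul]
    congr 1; push_cast; ring

theorem Good.h_f_pow (G : Good e f h) {v : V} {r : K} (hv : h v = r • v) (k : ℕ) :
    h ((f ^ k) v) = (r - 2 * k) • (f ^ k) v := by
  induction k with
  | zero => simp [hv]
  | succ k ih =>
    rw [pow_succ', Module.End.mul_apply, G.hf, ih, map_smul, ← sub_smul]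
    congr 1; push_cast; ring

theorem Good.e_f_pow (G : Good e f h) {v : V} {r : K} (hv : h v = r • v) (k : ℕ) :
    e ((f ^ (k + 1)) v) = (f ^ (k + 1)) (e v) + ((k + 1) * (r - k) : K) • (f ^ k) v := by
  induction k with
  | zero => simp [hv, G.ef]
  | succ k ih =>
    rw [pow_succ' f (k+1), Module.End.mul_apply, G.ef, ih, G.h_f_pow hv, map_add, map_smul,
      Module.End.mul_apply, add_assoc]
    congr 1
    rw [← Module.End.mul_apply f, ← pow_succ', ← add_smul]
    congr 1; push_cast; ring

/-- weights of highest weight vectors -/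
theorem Good.hw_nat (G : Good e f h) {v : V} {r : K} (hv : h v = r • v) (he : e v = 0)
    (hv0 : v ≠ 0) : ∃ n : ℕ, r = n ∧ (f ^ (n + 1)) v = 0 := by
  classical
  have hex := G.ln_f v
  obtain ⟨j, hj, hmin⟩ : ∃ j, (f ^ j) v = 0 ∧ ∀ i < j, (f ^ i) v ≠ 0 :=
    ⟨Nat.find hex, Nat.find_spec hex, fun i hi => Nat.find_min hex hi⟩
  cases j with
  | zero => simp at hj; exact absurd hj hv0
  | succ k =>
    have := G.e_f_pow hv k
    rw [hj, he, map_zero, map_zero, zero_add] at this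
    have h2 := (smul_eq_zero.mp this.symm).resolve_right (hmin k (Nat.lt_succ_self k))
    refine ⟨k, ?_, hj⟩
    rcases mul_eq_zero.mp h2 with h3 | h3
    · exact absurd h3 (by exact_mod_cast Nat.succ_ne_zero k)
    · exact sub_eq_zero.mp h3

theorem Good.f_zero (G : Good e f h) {v : V} (hv : h v = 0) (he : e v = 0) : f v = 0 := by
  by_cases hv0 : v = 0
  · simp [hv0]
  obtain ⟨n, hn, hf⟩ := G.hw_nat (r := 0) (by simpa using hv) he hv0
  have : n = 0 := by exact_mod_cast hn.symm
  subst this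
  simpa using hf

theorem sum_stable (h : Module.End K V) (p : Submodule K V) (hp : ∀ x ∈ p, h x ∈ p)
    (s : Finset K) : ∀ v : K → V, (∀ μ, h (v μ) = μ • v μ) → ∑ μ ∈ s, v μ ∈ p →
      ∀ μ ∈ s, v μ ∈ p := by
  classical
  induction s using Finset.induction_on with
  | empty => simp
  | insert a s ha ih =>
    intro v hv hsum
    have h1 : ∑ μ ∈ s, (μ - a) • v μ ∈ p := by
      have h2 := p.sub_mem (hp _ hsum) (p.smul_mem a hsum)
      rw [map_sum, Finset.smul_sum, ← Finset.sum_sub_distrib, Finset.sum_insert ha] at h2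
      simpa [hv, sub_smul] using h2
    have h3 := ih (fun μ => (μ - a) • v μ)
      (fun μ => by rw [map_smul, hv, smul_comm]) h1
    have h4 : ∀ μ ∈ s, v μ ∈ p := fun μ hμ => by
      have hne : μ - a ≠ 0 := sub_ne_zero.mpr (fun hh => ha (hh ▸ hμ))
      have := p.smul_mem (μ - a)⁻¹ (h3 μ hμ)
      rwa [smul_smul, inv_mul_cancel₀ hne, one_smul] at this
    intro μ hμ
    rcases Finset.mem_insert.mp hμ with rfl | hμ
    · rw [Finset.sum_insert ha] at hsum
      exact (p.add_mem_iff_left (p.sum_mem h4)).mp hsum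
    · exact h4 μ hμ

theorem diag_stable {h : Module.End K V} (hd : ⨆ μ : K, Module.End.eigenspace h μ = ⊤)
    (p : Submodule K V) (hp : ∀ x ∈ p, h x ∈ p) :
    p ≤ ⨆ μ : K, p ⊓ Module.End.eigenspace h μ := by
  intro v hv
  have hv' : v ∈ (⨆ μ : K, Module.End.eigenspace h μ) := by rw [hd]; trivial
  obtain ⟨w, hw, rfl⟩ := (Submodule.mem_iSup_iff_exists_finsupp _ _).mp hv'
  have := sum_stable h p hp w.support w
    (fun μ => Module.End.mem_eigenspace_iff.mp (hw μ)) hv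
  exact Submodule.sum_mem _ fun μ hμ =>
    Submodule.mem_iSup_of_mem μ ⟨this μ hμ, hw μ⟩

theorem Good.h_sq (G : Good e f h) {v : V} (hv : h (h v) = 0) : h v = 0 := by
  have key := diag_stable G.diag (LinearMap.ker (h * h))
    (fun x hx => by
      simp only [LinearMap.mem_ker, Module.End.mul_apply] at hx ⊢
      simp [hx])
  have hmem : v ∈ LinearMap.ker (h * h) := hv
  replace hmem := key hmem
  have hle : (⨆ μ : K, LinearMap.ker (h * h) ⊓ Module.End.eigenspace h μ)
      ≤ LinearMap.ker h := by
    refine iSup_le fun μ => ?_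
    rintro x ⟨hx1, hx2⟩
    have hx2 : h x = μ • x := Module.End.mem_eigenspace_iff.mp hx2
    have hx1 : h (h x) = 0 := hx1
    rw [hx2, map_smul, hx2, smul_smul] at hx1
    rw [LinearMap.mem_ker, hx2]
    rcases smul_eq_zero.mp hx1 with h0 | h0
    · rw [mul_self_eq_zero.mp h0, zero_smul]
    · rw [h0, smul_zero]
  exact hle hmem

theorem Good.h_split (G : Good e f h) (v : V) : ∃ v0 t, h v0 = 0 ∧ v = v0 + h t := by
  have hv : v ∈ (⨆ μ : K, Module.End.eigenspace h μ) := by rw [G.diag]; trivial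
  have hle : (⨆ μ : K, Module.End.eigenspace h μ) ≤ LinearMap.ker h ⊔ LinearMap.range h := by
    refine iSup_le fun μ x hx => ?_
    have hx := Module.End.mem_eigenspace_iff.mp hx
    by_cases h0 : μ = 0
    · exact Submodule.mem_sup_left (by simp [hx, h0])
    · refine Submodule.mem_sup_right ⟨μ⁻¹ • x, ?_⟩
      rw [map_smul, hx, smul_smul, inv_mul_cancel₀ h0, one_smul]
  obtain ⟨a, ha, b, ⟨t, rfl⟩, hab⟩ := Submodule.mem_sup.mp (hle hv)
  exact ⟨a, t, ha, hab.symm⟩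

theorem e_pow_add_zero (e : Module.End K V) {v : V} {n m : ℕ} (hnm : n ≤ m)
    (hv : (e ^ n) v = 0) : (e ^ m) v = 0 := by
  obtain ⟨k, rfl⟩ := Nat.exists_eq_add_of_le hnm
  rw [add_comm, pow_add, Module.End.mul_apply, hv, map_zero]

/-- coefficients of the projector -/
noncomputable def pc (K : Type) [Field K] (k : ℕ) : K :=
  (-1) ^ k / ((k.factorial : K) * ((k + 1).factorial : K))

theorem pc_succ (k : ℕ) : pc K (k + 1) * ((k + 1) * (k + 2)) = - pc K k := by
  unfold pc
  have h1 : (k.factorial : K) ≠ 0 := by exact_mod_cast k.factorial_ne_zero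
  have h2 : (k : K) + 1 ≠ 0 := by exact_mod_cast k.succ_ne_zero
  have h3 : (k : K) + 1 + 1 ≠ 0 := by exact_mod_cast (k+1).succ_ne_zero
  rw [Nat.factorial_succ (k+1), Nat.factorial_succ k]
  push_cast
  field_simp
  ring

/-- truncated extremal projector -/
noncomputable def proj (e f : Module.End K V) (B : ℕ) : Module.End K V :=
  ∑ k ∈ Finset.range B, pc K k • (f ^ k * e ^ k)

theorem proj_apply (e f : Module.End K V) (B : ℕ) (v : V) :
    proj e f B v = ∑ k ∈ Finset.range B, pc K k • (f ^ k) ((e ^ k) v) := by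
  simp [proj, LinearMap.sum_apply]

theorem Good.h_proj (G : Good e f h) {v : V} (hv : h v = 0) (B : ℕ) :
    h (proj e f B v) = 0 := by
  rw [proj_apply, map_sum]
  refine Finset.sum_eq_zero fun k _ => ?_
  have h1 := G.h_e_pow (r := 0) (by simpa using hv) k
  rw [map_smul, G.h_f_pow h1 k]
  simp

theorem Good.e_proj_aux (G : Good e f h) {v : V} (hv : h v = 0) (B : ℕ) :
    e (proj e f (B + 1) v) = pc K B • (f ^ B) ((e ^ (B + 1)) v) := by
  induction B with
  | zero => simp [proj_apply]
  | succ B ih =>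
    have : proj e f (B + 1 + 1) v = proj e f (B + 1) v
        + pc K (B + 1) • (f ^ (B + 1)) ((e ^ (B + 1)) v) := by
      rw [proj_apply, Finset.sum_range_succ, ← proj_apply]
    have h1 := G.h_e_pow (r := 0) (by simpa using hv) (B + 1)
    rw [this, map_add, ih, map_smul, G.e_f_pow h1 B, smul_add, smul_smul,
      ← Module.End.mul_apply e, ← pow_succ']
    have : pc K (B + 1) * (((B : K) + 1) * (0 + 2 * ((B + 1 : ℕ) : K) - B)) = - pc K B := by
      rw [← pc_succ]; push_cast; ring
    rw [this, neg_smul]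
    abel

theorem Good.e_proj (G : Good e f h) {v : V} (hv : h v = 0) {B : ℕ} (hB : (e ^ B) v = 0) :
    e (proj e f (B + 1) v) = 0 := by
  rw [G.e_proj_aux hv, e_pow_add_zero e (Nat.le_succ B) hB]; simp

theorem proj_fix {v : V} (hv : e v = 0) (B : ℕ) : proj e f (B + 1) v = v := by
  rw [proj_apply, Finset.sum_range_succ', Finset.sum_eq_zero]
  · simp [pc]
  · intro k _
    rw [pow_succ, Module.End.mul_apply, pow_succ, Module.End.mul_apply, hv]
    simp

end sl2

section hilbert
variable {K R N : Type} [Field K] [CharZero K] [CommRing R] [Algebra K R]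
  [AddCommGroup N] [Module K N] [Module R N] [IsScalarTower K R N]

theorem pow_leib {e : Module.End K R} {e' : Module.End K N}
    (he : ∀ (s : R) (n : N), e' (s • n) = e s • n + s • e' n) {n : N} (hn : e' n = 0)
    (k : ℕ) (s : R) : (e' ^ k) (s • n) = (e ^ k) s • n := by
  induction k generalizing s with
  | zero => simp
  | succ k ih => rw [pow_succ, Module.End.mul_apply, he, hn, smul_zero, add_zero, ih,
      pow_succ, Module.End.mul_apply]

theorem hilbert [IsNoetherianRing R] [Module.Finite R N]
    {e f h : Module.End K R} {e' f' h' : Module.End K N} (G : Good e f h) (G' : Good e' f' h')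
    (he : ∀ (s : R) (n : N), e' (s • n) = e s • n + s • e' n)
    (hf : ∀ (s : R) (n : N), f' (s • n) = f s • n + s • f' n)
    (hh : ∀ (s : R) (n : N), h' (s • n) = h s • n + s • h' n) :
    ∃ (k : ℕ) (g : Fin k → N), (∀ i, e' (g i) = 0 ∧ h' (g i) = 0) ∧
      ∀ n, e' n = 0 → h' n = 0 → ∃ c : Fin k → R, (∀ i, e (c i) = 0) ∧ n = ∑ i, c i • g i := by
  have hfg : (Submodule.span R {n : N | e' n = 0 ∧ h' n = 0}).FG := IsNoetherian.noetherian _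
  obtain ⟨s', hs', hspan⟩ := Submodule.fg_span_iff_fg_span_finset_subset _ |>.mp hfg
  let g : Fin s'.card → N := fun i => (s'.equivFin.symm i : N)
  have hg : ∀ i, e' (g i) = 0 ∧ h' (g i) = 0 := fun i => hs' (s'.equivFin.symm i).2
  have hr : Set.range g = (s' : Set N) := by
    ext x; constructor
    · rintro ⟨i, rfl⟩; exact (s'.equivFin.symm i).2
    · intro hx; exact ⟨s'.equivFin ⟨x, hx⟩, by simp [g]⟩
  refine ⟨s'.card, g, hg, fun n hn1 hn2 => ?_⟩
  have hn : n ∈ Submodule.span R (Set.range g) := by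
    rw [hr, ← hspan]; exact Submodule.subset_span ⟨hn1, hn2⟩
  obtain ⟨c, hc⟩ := (Submodule.mem_span_range_iff_exists_fun R).mp hn
  choose c0 t hc0 hct using fun i => G.h_split (c i)
  have hn0 : n = ∑ i, c0 i • g i := by
    have h1 : n - ∑ i, c0 i • g i = h' (∑ i, t i • g i) := by
      rw [← hc, ← Finset.sum_sub_distrib, map_sum]
      refine Finset.sum_congr rfl fun i _ => ?_
      rw [hh, (hg i).2, smul_zero, add_zero, hct i, ← sub_smul, add_sub_cancel_left]
    have h2 : h' (n - ∑ i, c0 i • g i) = 0 := by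
      rw [map_sub, hn2, map_sum, zero_sub, neg_eq_zero]
      refine Finset.sum_eq_zero fun i _ => ?_
      rw [hh, (hg i).2, hc0]; simp
    rw [h1] at h2
    have := G'.h_sq h2
    rw [this] at h1
    exact sub_eq_zero.mp h1
  choose B hB using fun i => G.ln_e (c0 i)
  let BB := Finset.univ.sup B
  refine ⟨fun i => proj e f (BB + 1) (c0 i), fun i => G.e_proj (hc0 i)
    (e_pow_add_zero e (Finset.le_sup (Finset.mem_univ i)) (hB i)), ?_⟩
  rw [← proj_fix (e := e') (f := f') hn1 BB]
  conv_lhs => rw [hn0]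
  rw [map_sum]
  refine Finset.sum_congr rfl fun i _ => ?_
  show _ = proj e f (BB + 1) (c0 i) • g i
  rw [proj_apply, proj_apply, Finset.sum_smul]
  refine Finset.sum_congr rfl fun k _ => ?_
  rw [pow_leib he (hg i).1, pow_leib hf (G'.f_zero (hg i).2 (hg i).1), smul_assoc]

end hilbert

section bil
variable {K A B C : Type} [Field K] [CharZero K] [AddCommGroup A] [Module K A]
  [AddCommGroup B] [Module K B] [AddCommGroup C] [Module K C]

theorem nil_bil (β : A →ₗ[K] B →ₗ[K] C) {eA : Module.End K A} {eB : Module.End K B}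
    {eC : Module.End K C} (hβ : ∀ a b, eC (β a b) = β (eA a) b + β a (eB b)) (n : ℕ) :
    ∀ (p q : ℕ) (a : A) (b : B), p + q ≤ n → (eA ^ p) a = 0 → (eB ^ q) b = 0 →
      (eC ^ n) (β a b) = 0 := by
  induction n with
  | zero =>
    intro p q a b hpq ha hb
    obtain rfl : p = 0 := by omega
    simp at ha; simp [ha]
  | succ n ih =>
    intro p q a b hpq ha hb
    cases p with
    | zero => simp at ha; simp [ha]
    | succ p =>
      cases q with
      | zero => simp at hb; simp [hb]
      | succ q =>
        rw [pow_succ, Module.End.mul_apply, hβ, map_add,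
          ih p (q + 1) (eA a) b (by omega) (by rw [← Module.End.mul_apply, ← pow_succ]; exact ha) hb,
          ih (p + 1) q a (eB b) (by omega) ha
            (by rw [← Module.End.mul_apply, ← pow_succ]; exact hb), add_zero]

/-- vectors killed by a power -/
def nilSub (e : Module.End K A) : Submodule K A where
  carrier := {v | ∃ n : ℕ, (e ^ n) v = 0}
  zero_mem' := ⟨0, by simp⟩
  add_mem' := by
    rintro a b ⟨n, hn⟩ ⟨m, hm⟩
    refine ⟨n + m, ?_⟩
    rw [map_add, e_pow_add_zero e (Nat.le_add_right n m) hn,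
      e_pow_add_zero e (Nat.le_add_left m n) hm, add_zero]
  smul_mem' := by
    rintro c a ⟨n, hn⟩
    exact ⟨n, by rw [map_smul, hn, smul_zero]⟩

theorem nilSub_bil (β : A →ₗ[K] B →ₗ[K] C) {eA : Module.End K A} {eB : Module.End K B}
    {eC : Module.End K C} (hβ : ∀ a b, eC (β a b) = β (eA a) b + β a (eB b))
    {a : A} {b : B} (ha : a ∈ nilSub eA) (hb : b ∈ nilSub eB) : β a b ∈ nilSub eC := by
  obtain ⟨p, hp⟩ := ha
  obtain ⟨q, hq⟩ := hb
  exact ⟨p + q, nil_bil β hβ _ p q a b le_rfl hp hq⟩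

theorem diag_bil (β : A →ₗ[K] B →ₗ[K] C) {eA : Module.End K A} {eB : Module.End K B}
    {eC : Module.End K C} (hβ : ∀ a b, eC (β a b) = β (eA a) b + β a (eB b))
    {a : A} {b : B} (ha : a ∈ ⨆ μ : K, Module.End.eigenspace eA μ)
    (hb : b ∈ ⨆ μ : K, Module.End.eigenspace eB μ) :
    β a b ∈ ⨆ μ : K, Module.End.eigenspace eC μ := by
  induction ha using Submodule.iSup_induction' with
  | zero => simp
  | add x y _ _ hx hy => rw [map_add, LinearMap.add_apply]; exact Submodule.add_mem _ hx hy
  | mem μ x hx =>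
    induction hb using Submodule.iSup_induction' with
    | zero => simp
    | add x y _ _ hx hy => rw [map_add]; exact Submodule.add_mem _ hx hy
    | mem ν y hy =>
      refine Submodule.mem_iSup_of_mem (μ + ν) (Module.End.mem_eigenspace_iff.mpr ?_)
      rw [hβ, Module.End.mem_eigenspace_iff.mp hx, Module.End.mem_eigenspace_iff.mp hy]
      simp [add_smul]

end bil

section gen
variable {K A : Type} [Field K] [CharZero K] [Ring A] [Algebra K A]

/-- Leibniz rule -/
def Leib (D : Module.End K A) : Prop := ∀ a b, D (a * b) = D a * b + a * D b

theorem Leib.one {D : Module.End K A} (hD : Leib D) : D 1 = 0 := by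
  have := hD 1 1
  simpa using this

theorem Leib.algebraMap {D : Module.End K A} (hD : Leib D) (c : K) :
    D (algebraMap K A c) = 0 := by
  rw [Algebra.algebraMap_eq_smul_one, map_smul, hD.one, smul_zero]

theorem Leib.ext {D E : Module.End K A} (hD : Leib D) (hE : Leib E) {X : Set A}
    (hX : Algebra.adjoin K X = ⊤) (hDE : ∀ x ∈ X, D x = E x) (a : A) : D a = E a := by
  have ha : a ∈ Algebra.adjoin K X := by rw [hX]; trivial
  induction ha using Algebra.adjoin_induction with
  | mem x hx => exact hDE x hx
  | algebraMap c => rw [hD.algebraMap, hE.algebraMap]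
  | add x y _ _ hx hy => rw [map_add, map_add, hx, hy]
  | mul x y _ _ hx hy => rw [hD, hE, hx, hy]

theorem Leib.comm {D E : Module.End K A} (hD : Leib D) (hE : Leib E) :
    Leib (D * E - E * D) := by
  intro a b
  simp only [LinearMap.sub_apply, Module.End.mul_apply, hD a b, hE a b, map_add, hD _ _, hE _ _]
  noncomm_ring

theorem Leib.smul {D : Module.End K A} (hD : Leib D) (c : K) : Leib (c • D) := by
  intro a b
  simp [hD a b]

theorem Leib.nil_top {D : Module.End K A} (hD : Leib D) {X : Set A}
    (hX : Algebra.adjoin K X = ⊤) (hDX : ∀ x ∈ X, x ∈ nilSub D) (a : A) : a ∈ nilSub D := by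
  have ha : a ∈ Algebra.adjoin K X := by rw [hX]; trivial
  induction ha using Algebra.adjoin_induction with
  | mem x hx => exact hDX x hx
  | algebraMap c => exact ⟨1, by simpa using hD.algebraMap c⟩
  | add x y _ _ hx hy => exact Submodule.add_mem _ hx hy
  | mul x y _ _ hx hy => exact nilSub_bil (LinearMap.mul K A) (fun a b => hD a b) hx hy

theorem Leib.diag_top {D : Module.End K A} (hD : Leib D) {X : Set A}
    (hX : Algebra.adjoin K X = ⊤) (hDX : ∀ x ∈ X, ∃ r : K, D x = r • x) :
    ⨆ μ : K, Module.End.eigenspace D μ = ⊤ := by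
  rw [eq_top_iff]
  intro a _
  have ha : a ∈ Algebra.adjoin K X := by rw [hX]; trivial
  induction ha using Algebra.adjoin_induction with
  | mem x hx =>
    obtain ⟨r, hr⟩ := hDX x hx
    exact Submodule.mem_iSup_of_mem r (Module.End.mem_eigenspace_iff.mpr hr)
  | algebraMap c =>
    exact Submodule.mem_iSup_of_mem 0
      (Module.End.mem_eigenspace_iff.mpr (by rw [hD.algebraMap, zero_smul]))
  | add x y _ _ hx hy => exact Submodule.add_mem _ (hx trivial) (hy trivial)
  | mul x y _ _ hx hy =>
    exact diag_bil (LinearMap.mul K A) (fun a b => hD a b) (hx trivial) (hy trivial)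

theorem good_of_gen {e f h : Module.End K A} (le : Leib e) (lf : Leib f) (lh : Leib h) {X : Set A}
    (hX : Algebra.adjoin K X = ⊤)
    (hgen : ∀ x ∈ X, (∃ y, e x = 0 ∧ f x = y ∧ e y = x ∧ f y = 0 ∧ h x = x ∧ h y = - y) ∨
      (∃ y, f x = 0 ∧ e x = y ∧ f y = x ∧ e y = 0 ∧ h x = - x ∧ h y = y)) :
    Good e f h where
  ef v := by
    have := Leib.ext (le.comm lf) lh hX (fun x hx => by
      rcases hgen x hx with ⟨y, h1, h2, h3, h4, h5, h6⟩ | ⟨y, h1, h2, h3, h4, h5, h6⟩ <;>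
      simp [h1, h2, h3, h4, h5, h6]) v
    simp only [LinearMap.sub_apply, Module.End.mul_apply] at this
    rw [← this]; abel
  he v := by
    have := Leib.ext (lh.comm le) (le.smul 2) hX (fun x hx => by
      rcases hgen x hx with ⟨y, h1, h2, h3, h4, h5, h6⟩ | ⟨y, h1, h2, h3, h4, h5, h6⟩ <;>
      simp [h1, h2, h3, h4, h5, h6, two_smul]) v
    simp only [LinearMap.sub_apply, Module.End.mul_apply, LinearMap.smul_apply] at this
    rw [← this]; abel
  hf v := by
    have := Leib.ext (lh.comm lf) (lf.smul (-2)) hX (fun x hx => by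
      rcases hgen x hx with ⟨y, h1, h2, h3, h4, h5, h6⟩ | ⟨y, h1, h2, h3, h4, h5, h6⟩ <;>
      simp [h1, h2, h3, h4, h5, h6, two_smul, sub_eq_add_neg]) v
    simp only [LinearMap.sub_apply, Module.End.mul_apply, LinearMap.smul_apply, neg_smul] at this
    rw [sub_eq_add_neg, ← this]; abel
  ln_e v := le.nil_top hX (fun x hx => by
      rcases hgen x hx with ⟨y, h1, h2, h3, h4, h5, h6⟩ | ⟨y, h1, h2, h3, h4, h5, h6⟩
      · exact ⟨1, by simpa using h1⟩
      · exact ⟨2, by simp [pow_two, h2, h4]⟩) v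
  ln_f v := lf.nil_top hX (fun x hx => by
      rcases hgen x hx with ⟨y, h1, h2, h3, h4, h5, h6⟩ | ⟨y, h1, h2, h3, h4, h5, h6⟩
      · exact ⟨2, by simp [pow_two, h2, h4]⟩
      · exact ⟨1, by simpa using h1⟩) v
  diag := lh.diag_top hX (fun x hx => by
      rcases hgen x hx with ⟨y, h1, h2, h3, h4, h5, h6⟩ | ⟨y, h1, h2, h3, h4, h5, h6⟩
      · exact ⟨1, by simpa using h5⟩
      · exact ⟨-1, by simpa using h5⟩)

end gen

section tens
open TensorProduct
variable {K V W : Type} [Field K] [CharZero K] [AddCommGroup V] [Module K V]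
  [AddCommGroup W] [Module K W]

/-- tensor product action -/
noncomputable def tm (e : Module.End K V) (e' : Module.End K W) : Module.End K (V ⊗[K] W) :=
  TensorProduct.map e LinearMap.id + TensorProduct.map LinearMap.id e'

@[simp] theorem tm_tmul (e : Module.End K V) (e' : Module.End K W) (v : V) (w : W) :
    tm e e' (v ⊗ₜ w) = e v ⊗ₜ w + v ⊗ₜ e' w := by simp [tm]

theorem good_tens {e f h : Module.End K V} {e' f' h' : Module.End K W} (G : Good e f h)
    (G' : Good e' f' h') : Good (tm e e') (tm f f') (tm h h') where
  ef v := by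
    induction v using TensorProduct.induction_on with
    | zero => simp
    | add x y hx hy => simp only [map_add, hx, hy]; abel
    | tmul x y => simp only [tm_tmul, map_add, G.ef, G'.ef, add_tmul, tmul_add]; abel
  he v := by
    induction v using TensorProduct.induction_on with
    | zero => simp
    | add x y hx hy => simp only [map_add, hx, hy, smul_add]; abel
    | tmul x y =>
      simp only [tm_tmul, map_add, G.he, G'.he, add_tmul, tmul_add, smul_add, tmul_smul,
        ← smul_tmul']
      abel
  hf v := by
    induction v using TensorProduct.induction_on with
    | zero => simp
    | add x y hx hy => simp only [map_add, hx, hy, smul_add]; abel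
    | tmul x y =>
      simp only [tm_tmul, map_add, G.hf, G'.hf, sub_tmul, tmul_sub, add_tmul, tmul_add,
        smul_add, tmul_smul, ← smul_tmul']
      abel
  ln_e v := by
    show v ∈ nilSub _
    induction v using TensorProduct.induction_on with
    | zero => exact Submodule.zero_mem _
    | add x y hx hy => exact Submodule.add_mem _ hx hy
    | tmul x y => exact nilSub_bil (TensorProduct.mk K V W) (tm_tmul e e') (G.ln_e x) (G'.ln_e y)
  ln_f v := by
    show v ∈ nilSub _
    induction v using TensorProduct.induction_on with
    | zero => exact Submodule.zero_mem _
    | add x y hx hy => exact Submodule.add_mem _ hx hy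
    | tmul x y => exact nilSub_bil (TensorProduct.mk K V W) (tm_tmul f f') (G.ln_f x) (G'.ln_f y)
  diag := by
    rw [eq_top_iff]
    intro v _
    induction v using TensorProduct.induction_on with
    | zero => exact Submodule.zero_mem _
    | add x y hx hy => exact Submodule.add_mem _ (hx trivial) (hy trivial)
    | tmul x y =>
      exact diag_bil (TensorProduct.mk K V W) (tm_tmul h h') (by rw [G.diag]; trivial)
        (by rw [G'.diag]; trivial)

end tens

section Q
open MvPolynomial
variable (K : Type) [Field K] [CharZero K]

/-- the auxiliary polynomial ring in two variables -/
abbrev Q : Type := MvPolynomial (Fin 2) K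

noncomputable def eQ : Derivation K (Q K) (Q K) := mkDerivation K ![X 1, 0]
noncomputable def fQ : Derivation K (Q K) (Q K) := mkDerivation K ![0, X 0]
noncomputable def hQ : Derivation K (Q K) (Q K) := mkDerivation K ![- X 0, X 1]

theorem leib_der {A : Type} [CommRing A] [Algebra K A] (D : Derivation K A A) :
    Leib (D : A →ₗ[K] A) := by
  intro a b
  simp [mul_comm, add_comm]

theorem goodQ : Good (K := K) (eQ K : Q K →ₗ[K] Q K) (fQ K : Q K →ₗ[K] Q K)
    (hQ K : Q K →ₗ[K] Q K) := by
  refine good_of_gen (leib_der K _) (leib_der K _) (leib_der K _) (X := Set.range X)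
    (adjoin_range_X) ?_
  rintro _ ⟨i, rfl⟩
  fin_cases i
  · right; exact ⟨X 1, by simp [eQ, fQ, hQ, mkDerivation_X]⟩
  · left; exact ⟨X 0, by simp [eQ, fQ, hQ, mkDerivation_X]⟩

noncomputable def evQ : Q K →ₐ[K] K := aeval ![1, 0]

theorem evQ_eQ (q : Q K) : evQ K (eQ K q) = 0 := by
  induction q using MvPolynomial.induction_on with
  | C c => simp
  | add p q hp hq => simp [hp, hq]
  | mul_X p i hp =>
    rw [Derivation.leibniz, map_add, smul_eq_mul, smul_eq_mul, map_mul, map_mul, hp]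
    fin_cases i <;> simp [eQ, mkDerivation_X, evQ]

theorem eQ_mon (a b : ℕ) : eQ K (X 0 ^ a * X 1 ^ b) = (a : K) • (X 0 ^ (a - 1) * X 1 ^ (b + 1)) := by
  rw [Derivation.leibniz, Derivation.leibniz_pow, Derivation.leibniz_pow]
  simp [eQ, mkDerivation_X, MvPolynomial.smul_eq_C_mul]
  ring

theorem hQ_mon (a b : ℕ) : hQ K (X 0 ^ a * X 1 ^ b) = ((b : K) - a) • (X 0 ^ a * X 1 ^ b) := by
  rw [Derivation.leibniz, Derivation.leibniz_pow, Derivation.leibniz_pow]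
  rcases a with _ | a <;> rcases b with _ | b <;>
  simp [hQ, mkDerivation_X, MvPolynomial.smul_eq_C_mul] <;>
  (try left) <;> ring

end Q

section transfer
open TensorProduct
variable {K M : Type} [Field K] [CharZero K] [AddCommGroup M] [Module K M]

theorem eNQ (e : Module.End K M) (z : M ⊗[K] Q K) :
    TensorProduct.rid K M (TensorProduct.map LinearMap.id (evQ K).toLinearMap
        (tm e (eQ K : Q K →ₗ[K] Q K) z)) =
      e (TensorProduct.rid K M (TensorProduct.map LinearMap.id (evQ K).toLinearMap z)) := by
  induction z using TensorProduct.induction_on with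
  | zero => simp
  | add x y hx hy => simp only [map_add, hx, hy]
  | tmul x y => simp [evQ_eQ]

/-- lift of a highest weight vector -/
noncomputable def liftv (f : Module.End K M) (m : M) (n j : ℕ) : M ⊗[K] Q K :=
  ∑ k ∈ Finset.range (j + 1), (((-1) ^ k / (k.factorial : K)) : K) •
    ((f ^ k) m ⊗ₜ[K] (MvPolynomial.X 0 ^ (n - k) * MvPolynomial.X 1 ^ k : Q K))

theorem liftv_e {e f h : Module.End K M} (G : Good e f h) {m : M} {n : ℕ} (hm : e m = 0)
    (hw : h m = (n : K) • m) (j : ℕ) (hj : j ≤ n) :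
    tm e (eQ K : Q K →ₗ[K] Q K) (liftv f m n j) =
      (((-1) ^ j / (j.factorial : K)) * ((n : K) - j)) •
      ((f ^ j) m ⊗ₜ[K] (MvPolynomial.X 0 ^ (n - j - 1) * MvPolynomial.X 1 ^ (j + 1) : Q K)) := by
  induction j with
  | zero =>
    have h1 := eQ_mon K n 0
    simp only [liftv, zero_add, Finset.sum_range_one, map_smul, tm_tmul, Nat.sub_zero,
      Derivation.coeFn_coe, h1]
    simp [hm]
  | succ j ih =>
    have h0 : liftv f m n (j + 1) = liftv f m n j + (((-1) ^ (j+1) / ((j+1).factorial : K)) : K) •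
    ((f ^ (j+1)) m ⊗ₜ[K] (MvPolynomial.X 0 ^ (n - (j+1)) * MvPolynomial.X 1 ^ (j+1) : Q K)) := by
      unfold liftv; rw [Finset.sum_range_succ]
    rw [h0, map_add, ih (by omega), map_smul, tm_tmul, G.e_f_pow hw j, hm, map_zero, zero_add,
      Derivation.coeFn_coe, eQ_mon, smul_add, ← smul_tmul', smul_smul, tmul_smul, smul_smul,
      ← add_assoc, Nat.sub_sub n j 1, ← add_smul]
    have hc : (-1 : K) ^ j / (j.factorial : K) * ((n : K) - j) +
      (-1) ^ (j + 1) / ((j + 1).factorial : K) * (((j : K) + 1) * ((n : K) - j)) = 0 := by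
      have h1 : (j.factorial : K) ≠ 0 := by exact_mod_cast j.factorial_ne_zero
      have h2 : (j : K) + 1 ≠ 0 := by exact_mod_cast j.succ_ne_zero
      rw [Nat.factorial_succ]
      push_cast
      field_simp
      ring
    rw [hc, zero_smul, zero_add, Nat.cast_sub hj]

theorem liftv_h {e f h : Module.End K M} (G : Good e f h) {m : M} {n : ℕ}
    (hw : h m = (n : K) • m) :
    tm h (hQ K : Q K →ₗ[K] Q K) (liftv f m n n) = 0 := by
  unfold liftv
  rw [map_sum]
  refine Finset.sum_eq_zero fun k hk => ?_
  have hk : k ≤ n := by simpa [Nat.lt_succ_iff] using hk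
  rw [map_smul, tm_tmul, Derivation.coeFn_coe, hQ_mon, G.h_f_pow hw, ← smul_tmul', tmul_smul,
    ← add_smul, Nat.cast_sub hk]
  have : (n : K) - 2 * k + (k - (n - k)) = 0 := by ring
  rw [this, zero_smul, smul_zero]

theorem liftv_ev (f : Module.End K M) (m : M) (n : ℕ) :
    TensorProduct.rid K M (TensorProduct.map LinearMap.id (evQ K).toLinearMap (liftv f m n n))
      = m := by
  unfold liftv
  rw [map_sum, map_sum, Finset.sum_range_succ', Finset.sum_eq_zero]
  · simp [evQ]
  · intro k _
    simp [evQ]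

theorem exists_lift {e f h : Module.End K M} (G : Good e f h) {m : M} (hm : e m = 0) :
    ∃ z : M ⊗[K] Q K, tm e (eQ K : Q K →ₗ[K] Q K) z = 0 ∧ tm h (hQ K : Q K →ₗ[K] Q K) z = 0 ∧
      TensorProduct.rid K M (TensorProduct.map LinearMap.id (evQ K).toLinearMap z) = m := by
  let Y : Submodule K M := Submodule.map
    ((TensorProduct.rid K M).toLinearMap ∘ₗ
      (TensorProduct.map LinearMap.id (evQ K).toLinearMap : M ⊗[K] Q K →ₗ[K] M ⊗[K] K))
    (LinearMap.ker (tm e (eQ K : Q K →ₗ[K] Q K)) ⊓ LinearMap.ker (tm h (hQ K : Q K →ₗ[K] Q K)))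
  have key := diag_stable G.diag (LinearMap.ker e) (fun x hx => by
    have hx : e x = 0 := hx
    have := G.he x
    rw [hx] at this
    simpa using this.symm)
  have hle : (⨆ μ : K, LinearMap.ker e ⊓ Module.End.eigenspace h μ) ≤ Y := by
    refine iSup_le fun μ => ?_
    rintro x ⟨hx1, hx2⟩
    have hx1 : e x = 0 := hx1
    have hx2 := Module.End.mem_eigenspace_iff.mp hx2
    by_cases hx0 : x = 0
    · rw [hx0]; exact Y.zero_mem
    obtain ⟨n, rfl, -⟩ := G.hw_nat hx2 hx1 hx0
    refine ⟨liftv f x n n, ⟨?_, liftv_h G hx2⟩, liftv_ev f x n⟩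
    show tm e _ _ = 0
    rw [liftv_e G hx1 hx2 n le_rfl]
    simp
  obtain ⟨z, ⟨h1, h2⟩, h3⟩ := hle (key (show m ∈ LinearMap.ker e from hm))
  exact ⟨z, h1, h2, h3⟩

end transfer

section abstractmain
open TensorProduct
variable {K S M : Type} [Field K] [CharZero K] [CommRing S] [Algebra K S]
  [AddCommGroup M] [Module K M] [Module S M] [IsScalarTower K S M]

/-- action of `S ⊗ Q` on `M ⊗ Q` -/
noncomputable def actHom (K S M : Type) [Field K] [CommRing S] [Algebra K S]
    [AddCommGroup M] [Module K M] [Module S M] [IsScalarTower K S M] :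
    S ⊗[K] Q K →ₐ[K] Module.End K (M ⊗[K] Q K) :=
  (Module.endTensorEndAlgHom (R := K) (A := K) (M := M) (N := Q K)).comp
    (Algebra.TensorProduct.map (Algebra.lsmul K K M) (Algebra.lmul K (Q K)))

theorem actHom_tmul (s : S) (q : Q K) (m : M) (p : Q K) :
    actHom K S M (s ⊗ₜ q) (m ⊗ₜ p) = (s • m) ⊗ₜ (q * p) := by
  simp [actHom]
  rfl

theorem actHom_leib {e : Module.End K S} {e' : Module.End K M} (D : Derivation K (Q K) (Q K))
    (he : ∀ (s : S) (n : M), e' (s • n) = e s • n + s • e' n)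
    (r : S ⊗[K] Q K) (z : M ⊗[K] Q K) :
    tm e' (D : Q K →ₗ[K] Q K) (actHom K S M r z) =
      actHom K S M (tm e (D : Q K →ₗ[K] Q K) r) z
        + actHom K S M r (tm e' (D : Q K →ₗ[K] Q K) z) := by
  induction r using TensorProduct.induction_on with
  | zero => simp
  | add x y hx hy => simp only [map_add, LinearMap.add_apply, hx, hy]; abel
  | tmul s q =>
    induction z using TensorProduct.induction_on with
    | zero => simp
    | add x y hx hy => simp only [map_add, hx, hy]; abel
    | tmul m p =>
      simp only [actHom_tmul, tm_tmul, he, map_add, LinearMap.add_apply, Derivation.coeFn_coe,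
        Derivation.leibniz, add_tmul, tmul_add, smul_eq_mul, mul_comm]
      abel

theorem actHom_ev (r : S ⊗[K] Q K) (z : M ⊗[K] Q K) :
    TensorProduct.rid K M (TensorProduct.map LinearMap.id (evQ K).toLinearMap
      (actHom K S M r z)) =
    TensorProduct.rid K S (TensorProduct.map LinearMap.id (evQ K).toLinearMap r) •
    TensorProduct.rid K M (TensorProduct.map LinearMap.id (evQ K).toLinearMap z) := by
  induction r using TensorProduct.induction_on with
  | zero => simp
  | add x y hx hy => simp only [map_add, LinearMap.add_apply, hx, hy, add_smul]
  | tmul s q =>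
    induction z using TensorProduct.induction_on with
    | zero => simp
    | add x y hx hy => simp only [map_add, hx, hy, smul_add]
    | tmul m p =>
      simp only [actHom_tmul, TensorProduct.map_tmul, TensorProduct.rid_tmul, LinearMap.id_apply,
        AlgHom.toLinearMap_apply, map_mul, smul_assoc, mul_smul]
      rw [smul_algebra_smul_comm (evQ K p) s m]

theorem abstract_main [Algebra.FiniteType K S] [Module.Finite S M]
    {e f h : Module.End K S} {e' f' h' : Module.End K M} (G : Good e f h) (G' : Good e' f' h')
    (he : ∀ (s : S) (n : M), e' (s • n) = e s • n + s • e' n)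
    (hf : ∀ (s : S) (n : M), f' (s • n) = f s • n + s • f' n)
    (hh : ∀ (s : S) (n : M), h' (s • n) = h s • n + s • h' n) :
    ∃ (k : ℕ) (g : Fin k → M), ∀ n, e' n = 0 ↔
      ∃ c : Fin k → S, (∀ i, e (c i) = 0) ∧ n = ∑ i, c i • g i := by
  let : Module (S ⊗[K] Q K) (M ⊗[K] Q K) :=
    Module.compHom (M ⊗[K] Q K) (actHom K S M).toRingHom
  have hsm : ∀ (r : S ⊗[K] Q K) (z : M ⊗[K] Q K), r • z = actHom K S M r z := fun _ _ => rfl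
  have : IsScalarTower K (S ⊗[K] Q K) (M ⊗[K] Q K) := ⟨fun c r z => by
    rw [hsm, hsm, map_smul, LinearMap.smul_apply]⟩
  have : Algebra.FiniteType K (S ⊗[K] Q K) :=
    Algebra.FiniteType.trans (S := S) inferInstance inferInstance
  have : IsNoetherianRing (S ⊗[K] Q K) := Algebra.FiniteType.isNoetherianRing K _
  have : Module.Finite (S ⊗[K] Q K) (M ⊗[K] Q K) := by
    classical
    obtain ⟨s, hs⟩ := (inferInstance : Module.Finite S M).fg_top
    refine ⟨⟨s.image (fun m => m ⊗ₜ[K] (1 : Q K)), ?_⟩⟩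
    rw [eq_top_iff]
    intro z _
    induction z using TensorProduct.induction_on with
    | zero => exact Submodule.zero_mem _
    | add x y hx hy => exact Submodule.add_mem _ (hx trivial) (hy trivial)
    | tmul m q =>
      have hm : m ∈ Submodule.span S (s : Set M) := by rw [hs]; trivial
      have h1 : m ⊗ₜ (1 : Q K) ∈ Submodule.span (S ⊗[K] Q K)
          (↑(s.image (fun m => m ⊗ₜ[K] (1 : Q K))) : Set (M ⊗[K] Q K)) := by
        induction hm using Submodule.span_induction with
        | mem x hx =>
          exact Submodule.subset_span (Finset.mem_coe.mpr (Finset.mem_image_of_mem _ hx))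
        | zero => rw [zero_tmul]; exact Submodule.zero_mem _
        | add x y _ _ hx hy =>
          rw [add_tmul]; exact Submodule.add_mem _ (hx trivial) (hy trivial)
        | smul a x _ hx =>
          have := Submodule.smul_mem _ (a ⊗ₜ (1 : Q K) : S ⊗[K] Q K) (hx trivial)
          rwa [hsm, actHom_tmul, one_mul] at this
      have := Submodule.smul_mem _ ((1 : S) ⊗ₜ q : S ⊗[K] Q K) h1
      rwa [hsm, actHom_tmul, one_smul, mul_one] at this
  obtain ⟨k, g, hg, hall⟩ := hilbert (good_tens G (goodQ K)) (good_tens G' (goodQ K))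
    (fun r z => actHom_leib (eQ K) he r z) (fun r z => actHom_leib (fQ K) hf r z)
    (fun r z => actHom_leib (hQ K) hh r z)
  refine ⟨k, fun i => TensorProduct.rid K M
    (TensorProduct.map LinearMap.id (evQ K).toLinearMap (g i)), fun n => ⟨fun hn => ?_, ?_⟩⟩
  · obtain ⟨z, hz1, hz2, rfl⟩ := exists_lift G' hn
    obtain ⟨c, hc, rfl⟩ := hall z hz1 hz2
    refine ⟨fun i => TensorProduct.rid K S
      (TensorProduct.map LinearMap.id (evQ K).toLinearMap (c i)), fun i => ?_, ?_⟩
    · rw [← eNQ, hc i]; simp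
    · rw [map_sum, map_sum]
      exact Finset.sum_congr rfl fun i _ => actHom_ev _ _
  · rintro ⟨c, hc, rfl⟩
    rw [map_sum]
    refine Finset.sum_eq_zero fun i _ => ?_
    rw [he, hc i, ← eNQ, (hg i).1]
    simp

end abstractmain

section restrict
variable {K V : Type} [Field K] [CharZero K] [AddCommGroup V] [Module K V]

theorem restrict_pow_coe {e : Module.End K V} {p : Submodule K V} (he : ∀ x ∈ p, e x ∈ p)
    (n : ℕ) (x : p) : (((e.restrict he) ^ n) x : V) = (e ^ n) (x : V) := by
  induction n generalizing x with
  | zero => simp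
  | succ n ih => rw [pow_succ, Module.End.mul_apply, ih, pow_succ, Module.End.mul_apply]; rfl

theorem good_restrict {e f h : Module.End K V} (G : Good e f h) (p : Submodule K V)
    (he : ∀ x ∈ p, e x ∈ p) (hf : ∀ x ∈ p, f x ∈ p) (hh : ∀ x ∈ p, h x ∈ p) :
    Good (e.restrict he) (f.restrict hf) (h.restrict hh) where
  ef v := Subtype.ext (G.ef v)
  he v := Subtype.ext (G.he v)
  hf v := Subtype.ext (G.hf v)
  ln_e v := by
    obtain ⟨n, hn⟩ := G.ln_e v
    exact ⟨n, Subtype.ext (by rw [restrict_pow_coe, hn]; rfl)⟩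
  ln_f v := by
    obtain ⟨n, hn⟩ := G.ln_f v
    exact ⟨n, Subtype.ext (by rw [restrict_pow_coe, hn]; rfl)⟩
  diag := by
    rw [eq_top_iff]
    rintro v -
    have key := diag_stable G.diag p hh
    have hle : (⨆ μ : K, p ⊓ Module.End.eigenspace h μ) ≤
        (⨆ μ : K, Module.End.eigenspace (h.restrict hh) μ).map p.subtype := by
      refine iSup_le fun μ => ?_
      rintro x ⟨hx1, hx2⟩
      refine ⟨⟨x, hx1⟩, Submodule.mem_iSup_of_mem μ (Module.End.mem_eigenspace_iff.mpr ?_), rfl⟩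
      exact Subtype.ext (Module.End.mem_eigenspace_iff.mp hx2)
    obtain ⟨w, hw, hwv⟩ := hle (key v.2)
    have : w = v := Subtype.ext hwv
    rwa [this] at hw

end restrict

section concrete
open MvPolynomial
variable (K : Type) [Field K] [CharZero K] (d : ℕ)

theorem comm_comm (a b c e : F K d) : (a * b - b * a) * (c * e - e * c) = 0 := by
  obtain ⟨a, rfl⟩ := RingQuot.mkAlgHom_surjective K (metaRel K d) a
  obtain ⟨b, rfl⟩ := RingQuot.mkAlgHom_surjective K (metaRel K d) b
  obtain ⟨c, rfl⟩ := RingQuot.mkAlgHom_surjective K (metaRel K d) c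
  obtain ⟨e, rfl⟩ := RingQuot.mkAlgHom_surjective K (metaRel K d) e
  have := RingQuot.mkAlgHom_rel K (s := metaRel K d)
    (x := (a * b - b * a) * (c * e - e * c)) (y := 0) ⟨rfl, a, b, c, e, rfl⟩
  simpa using this

theorem adjoin_xb : Algebra.adjoin K (Set.range (xb K d)) = ⊤ := by
  have h1 : Set.range (xb K d) =
      (RingQuot.mkAlgHom K (metaRel K d)) '' (Set.range (FreeAlgebra.ι K)) := by
    rw [← Set.range_comp]; rfl
  rw [h1, ← AlgHom.map_adjoin, FreeAlgebra.adjoin_range_ι, Algebra.map_top]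
  exact (AlgHom.range_eq_top _).mpr (RingQuot.mkAlgHom_surjective K (metaRel K d))

theorem ring_id1 {R : Type} [Ring R] {a a' b b' c c' e e' : R}
    (h1 : (a * b - b * a) * (c * e' - e' * c) = 0)
    (h2 : (a * b - b * a) * (c' * e - e * c') = 0)
    (h3 : (a * b' - b' * a) * (c * e - e * c) = 0)
    (h4 : (a' * b - b * a') * (c * e - e * c) = 0) :
    (a * b - b * a) * (c * e' + c' * e - (e * c' + e' * c)) +
      (a * b' + a' * b - (b * a' + b' * a)) * (c * e - e * c) = 0 := by
  have : (a * b - b * a) * (c * e' + c' * e - (e * c' + e' * c)) +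
      (a * b' + a' * b - (b * a' + b' * a)) * (c * e - e * c) =
      (a * b - b * a) * (c * e' - e' * c) + (a * b - b * a) * (c' * e - e * c')
      + (a * b' - b' * a) * (c * e - e * c) + (a' * b - b * a') * (c * e - e * c) := by
    noncomm_ring
  rw [this, h1, h2, h3, h4]; simp

theorem ring_id2 {R : Type} [Ring R] (a b c e a' b' c' e' : R) :
    (a' * (b * c - c * b) + a * (b' * c + b * c' - (c' * b + c * b'))) * e
      + a * (b * c - c * b) * e' = a' * (b * c - c * b) * e
      + a * (b' * c - c * b') * e + a * (b * c' - c' * b) * e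
      + a * (b * c - c * b) * e' := by noncomm_ring

theorem ring_id3 {R : Type} [Ring R] (z x y : R) :
    z * (x * y) - x * y * z = (z * x - x * z) * y + x * (z * y - y * z) := by noncomm_ring

theorem ring_id4 {R : Type} [Ring R] (x y c : R) :
    x * y * c - c * (x * y) = (x * c - c * x) * y + x * (y * c - c * y) := by noncomm_ring

theorem ring_id5 {R : Type} [Ring R] (x f : R) :
    x * f - f * x = f * (-x) - (-x) * f := by noncomm_ring

theorem comm_tsz (A B C E : TrivSqZeroExt (F K d) (F K d)) :
    (A * B - B * A) * (C * E - E * C) = 0 := by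
  have hc := comm_comm K d
  ext
  · simp [hc]
  · simp only [TrivSqZeroExt.snd_mul, TrivSqZeroExt.snd_sub, TrivSqZeroExt.fst_sub,
      TrivSqZeroExt.fst_mul, smul_eq_mul, MulOpposite.smul_eq_mul_unop, MulOpposite.unop_op,
      TrivSqZeroExt.snd_zero]
    have h1 := hc A.fst B.fst C.fst E.snd
    have h2 := hc A.fst B.fst C.snd E.fst
    have h3 := hc A.fst B.snd C.fst E.fst
    have h4 := hc A.snd B.fst C.fst E.fst
    exact ring_id1 h1 h2 h3 h4

theorem exists_der (w : ι d → F K d) :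
    ∃ D : Module.End K (F K d), Leib D ∧ ∀ j, D (xb K d j) = w j := by
  let φ : P K d →ₐ[K] TrivSqZeroExt (F K d) (F K d) :=
    FreeAlgebra.lift K (fun j => TrivSqZeroExt.inl (xb K d j) + TrivSqZeroExt.inr (w j))
  have hφ : ∀ ⦃x y : P K d⦄, metaRel K d x y → φ x = φ y := by
    rintro x y ⟨rfl, a, b, c, e, rfl⟩
    simp only [map_mul, map_sub, map_zero]
    exact comm_tsz K d _ _ _ _
  let ψ : F K d →ₐ[K] TrivSqZeroExt (F K d) (F K d) := RingQuot.liftAlgHom K ⟨φ, hφ⟩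
  have hψ : ∀ j, ψ (xb K d j) = TrivSqZeroExt.inl (xb K d j) + TrivSqZeroExt.inr (w j) := by
    intro j
    simp only [ψ, xb, RingQuot.liftAlgHom_mkAlgHom_apply, φ, FreeAlgebra.lift_ι_apply]
  have hfst : ∀ a, (ψ a).fst = a := by
    intro a
    have ha : a ∈ Algebra.adjoin K (Set.range (xb K d)) := by rw [adjoin_xb]; trivial
    induction ha using Algebra.adjoin_induction with
    | mem x hx => obtain ⟨j, rfl⟩ := hx; simp [hψ]
    | algebraMap c => rw [AlgHom.commutes]; rfl
    | add x y _ _ hx hy => simp [hx, hy]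
    | mul x y _ _ hx hy => simp [hx, hy]
  refine ⟨(TrivSqZeroExt.sndHom (F K d) (F K d)).restrictScalars K ∘ₗ ψ.toLinearMap, fun a b => ?_, fun j => ?_⟩
  · show (ψ (a * b)).snd = (ψ a).snd * b + a * (ψ b).snd
    rw [map_mul, TrivSqZeroExt.snd_mul, hfst, hfst, smul_eq_mul, MulOpposite.smul_eq_mul_unop,
      MulOpposite.unop_op]
    exact add_comm _ _
  · show (ψ (xb K d j)).snd = w j
    rw [hψ, TrivSqZeroExt.snd_add, TrivSqZeroExt.snd_inl, TrivSqZeroExt.snd_inr]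
    exact zero_add _

theorem F'_stable {D : Module.End K (F K d)} (hD : Leib D) : ∀ x ∈ F' K d, D x ∈ F' K d := by
  intro x hx
  induction hx using Submodule.span_induction with
  | mem x hx =>
    obtain ⟨a, b, c, e, rfl⟩ := hx
    have : D (a * (b * c - c * b) * e) = D a * (b * c - c * b) * e
      + a * (D b * c - c * D b) * e + a * (b * D c - D c * b) * e
      + a * (b * c - c * b) * D e := by
      rw [hD, hD a, map_sub, hD b c, hD c b]; exact ring_id2 _ _ _ _ _ _ _ _
    rw [this]
    refine Submodule.add_mem _ (Submodule.add_mem _ (Submodule.add_mem _ ?_ ?_) ?_) ?_ <;>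
    exact Submodule.subset_span ⟨_, _, _, _, rfl⟩
  | zero => simp
  | add x y _ _ hx hy => rw [map_add]; exact Submodule.add_mem _ hx hy
  | smul c x _ hx => rw [map_smul]; exact Submodule.smul_mem _ _ hx

theorem comm_mem_F' (a b : F K d) : a * b - b * a ∈ F' K d :=
  Submodule.subset_span ⟨1, a, b, 1, by simp⟩

theorem mod_leib [Module (S K d) ↥(F' K d)] [IsScalarTower K (S K d) (F' K d)]
    (hu : ∀ (i : ι d) (f : ↥(F' K d)),
      (↑((MvPolynomial.X (Sum.inl i) : S K d) • f) : F K d) = xb K d i * ↑f)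
    (hv : ∀ (i : ι d) (f : ↥(F' K d)),
      (↑((MvPolynomial.X (Sum.inr i) : S K d) • f) : F K d)
        = ↑f * xb K d i - xb K d i * ↑f)
    {D : Module.End K (F K d)} (hD : Leib D) (DS : Derivation K (S K d) (S K d))
    (hDu : ∀ (i : ι d) (f : ↥(F' K d)),
      (↑(DS (MvPolynomial.X (Sum.inl i) : S K d) • f) : F K d) = D (xb K d i) * ↑f)
    (hDv : ∀ (i : ι d) (f : ↥(F' K d)),
      (↑(DS (MvPolynomial.X (Sum.inr i) : S K d) • f) : F K d)
        = ↑f * D (xb K d i) - D (xb K d i) * ↑f)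
    (s : S K d) (n : F' K d) :
    (D.restrict (F'_stable K d hD)) (s • n) =
      (DS : S K d →ₗ[K] S K d) s • n + s • (D.restrict (F'_stable K d hD)) n := by
  induction s using MvPolynomial.induction_on generalizing n with
  | C c =>
    have h1 : ∀ m : F' K d, (C c : S K d) • m = c • m := fun m => by
      rw [← algebraMap_eq, algebraMap_smul]
    rw [h1, h1, map_smul]
    simp
  | add p q hp hq => simp only [add_smul, map_add, hp, hq]; abel
  | mul_X p i hp =>
    have hX : (D.restrict (F'_stable K d hD)) ((X i : S K d) • n) =
      (DS : S K d →ₗ[K] S K d) (X i) • n + (X i : S K d) • (D.restrict (F'_stable K d hD)) n := by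
      apply Subtype.ext
      rcases i with i | i
      · simp only [LinearMap.coe_restrict_apply, Submodule.coe_add, hu, Derivation.coeFn_coe, hDu]
        exact hD _ _
      · simp only [LinearMap.coe_restrict_apply, Submodule.coe_add, hv, Derivation.coeFn_coe, hDv,
          map_sub, hD (xb K d i) n, hD n (xb K d i)]
        noncomm_ring
    rw [mul_smul, hp, hX]
    simp only [Derivation.coeFn_coe, Derivation.leibniz, smul_eq_mul, add_smul, smul_add, mul_smul]
    rw [smul_comm (X i : S K d)]
    abel

theorem fin_F' [Module (S K d) ↥(F' K d)] [IsScalarTower K (S K d) (F' K d)]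
    (hu : ∀ (i : ι d) (f : ↥(F' K d)),
      (↑((MvPolynomial.X (Sum.inl i) : S K d) • f) : F K d) = xb K d i * ↑f)
    (hv : ∀ (i : ι d) (f : ↥(F' K d)),
      (↑((MvPolynomial.X (Sum.inr i) : S K d) • f) : F K d)
        = ↑f * xb K d i - xb K d i * ↑f) : Module.Finite (S K d) (F' K d) := by
  let gg : ι d × ι d → F' K d := fun j =>
    ⟨xb K d j.1 * xb K d j.2 - xb K d j.2 * xb K d j.1, comm_mem_F' K d _ _⟩
  let Y0 : Submodule (S K d) (F' K d) := Submodule.span (S K d) (Set.range gg)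
  let Y : Submodule K (F K d) := (Y0.restrictScalars K).map (F' K d).subtype
  have hl0 : ∀ i, ∀ y ∈ Y, xb K d i * y ∈ Y := by
    rintro i _ ⟨y, hy, rfl⟩
    exact ⟨(X (Sum.inl i) : S K d) • y, Y0.smul_mem _ hy, hu i y⟩
  have hr0 : ∀ i, ∀ y ∈ Y, y * xb K d i ∈ Y := by
    rintro i _ ⟨y, hy, rfl⟩
    refine ⟨(X (Sum.inr i) : S K d) • y + (X (Sum.inl i) : S K d) • y,
      Y0.add_mem (Y0.smul_mem _ hy) (Y0.smul_mem _ hy), ?_⟩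
    rw [map_add, Submodule.subtype_apply, Submodule.subtype_apply, hu, hv]
    simp
  have hmem : ∀ a : F K d, a ∈ Algebra.adjoin K (Set.range (xb K d)) := by
    intro a; rw [adjoin_xb]; trivial
  have hl : ∀ a, ∀ y ∈ Y, a * y ∈ Y := by
    intro a
    induction hmem a using Algebra.adjoin_induction with
    | mem x hx => obtain ⟨i, rfl⟩ := hx; exact hl0 i
    | algebraMap c => intro y hy; rw [← Algebra.smul_def]; exact Y.smul_mem _ hy
    | add x y _ _ hx hy => intro z hz; rw [add_mul]; exact Y.add_mem (hx z hz) (hy z hz)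
    | mul x y _ _ hx hy => intro z hz; rw [mul_assoc]; exact hx _ (hy z hz)
  have hr : ∀ a, ∀ y ∈ Y, y * a ∈ Y := by
    intro a
    induction hmem a using Algebra.adjoin_induction with
    | mem x hx => obtain ⟨i, rfl⟩ := hx; exact hr0 i
    | algebraMap c =>
      intro y hy; rw [← Algebra.commutes, ← Algebra.smul_def]; exact Y.smul_mem _ hy
    | add x y _ _ hx hy => intro z hz; rw [mul_add]; exact Y.add_mem (hx z hz) (hy z hz)
    | mul x y _ _ hx hy => intro z hz; rw [← mul_assoc]; exact hy _ (hx z hz)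
  have hc1 : ∀ i c, xb K d i * c - c * xb K d i ∈ Y := by
    intro i c
    induction hmem c using Algebra.adjoin_induction with
    | mem x hx =>
      obtain ⟨j, rfl⟩ := hx
      exact ⟨gg (i, j), Submodule.subset_span ⟨_, rfl⟩, rfl⟩
    | algebraMap c => rw [Algebra.commutes, sub_self]; exact Y.zero_mem
    | add x y _ _ hx hy =>
      have := Y.add_mem hx hy
      convert this using 1; noncomm_ring
    | mul x y _ _ hx hy =>
      have := Y.add_mem (hr y _ hx) (hl x _ hy)
      rwa [← ring_id3] at this
  have hc : ∀ b c, b * c - c * b ∈ Y := by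
    intro b c
    induction hmem b using Algebra.adjoin_induction with
    | mem x hx => obtain ⟨j, rfl⟩ := hx; exact hc1 j c
    | algebraMap r => rw [Algebra.commutes, sub_self]; exact Y.zero_mem
    | add x y _ _ hx hy =>
      have := Y.add_mem hx hy
      convert this using 1; noncomm_ring
    | mul x y _ _ hx hy =>
      have := Y.add_mem (hr y _ hx) (hl x _ hy)
      rwa [← ring_id4] at this
  have hF : F' K d ≤ Y := by
    refine Submodule.span_le.mpr ?_
    rintro _ ⟨a, b, c, e, rfl⟩
    exact hr e _ (hl a _ (hc b c))
  have htop : Y0 = ⊤ := by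
    rw [eq_top_iff]
    rintro v -
    obtain ⟨y, hy, hyv⟩ := hF v.2
    have : y = v := Subtype.ext hyv
    exact this ▸ hy
  exact ⟨htop ▸ Submodule.fg_span (Set.finite_range gg)⟩

end concrete

/-- `(F')^δ` is a finitely generated module over `S^δ = ker δ_S`, where `F'` is an
`S`-module via `f·u_i = x̄_i f` and `f·v_i = [f, x̄_i]`. -/
theorem stmt7 (K : Type) [Field K] [CharZero K] (d : ℕ) (hd : 1 ≤ d)
    [Module (S K d) ↥(F' K d)]
    (halg : ∀ (c : K) (f : ↥(F' K d)), (MvPolynomial.C c : S K d) • f = c • f)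
    (hu : ∀ (i : ι d) (f : ↥(F' K d)),
      (↑((MvPolynomial.X (Sum.inl i) : S K d) • f) : F K d) = xb K d i * ↑f)
    (hv : ∀ (i : ι d) (f : ↥(F' K d)),
      (↑((MvPolynomial.X (Sum.inr i) : S K d) • f) : F K d)
        = ↑f * xb K d i - xb K d i * ↑f)
    (δ : F K d →ₗ[K] F K d)
    (hder : ∀ a b : F K d, δ (a * b) = δ a * b + a * δ b)
    (hδ0 : ∀ i : Fin d, δ (xb K d (i, 0)) = 0)
    (hδ1 : ∀ i : Fin d, δ (xb K d (i, 1)) = xb K d (i, 0))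
    (δS : Derivation K (S K d) (S K d))
    (hSu0 : ∀ i : Fin d, δS (X (Sum.inl (i, 0))) = 0)
    (hSu1 : ∀ i : Fin d, δS (X (Sum.inl (i, 1))) = X (Sum.inl (i, 0)))
    (hSv0 : ∀ i : Fin d, δS (X (Sum.inr (i, 0))) = 0)
    (hSv1 : ∀ i : Fin d, δS (X (Sum.inr (i, 1))) = X (Sum.inr (i, 0))) :
    ∃ (k : ℕ) (g : Fin k → ↥(F' K d)),
      ∀ f : ↥(F' K d),
        δ (↑f : F K d) = 0 ↔
          ∃ c : Fin k → S K d, (∀ l, δS (c l) = 0) ∧ f = ∑ l, c l • g l := by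
  have : IsScalarTower K (S K d) (F' K d) := ⟨fun c s f => by
    rw [MvPolynomial.smul_eq_C_mul, mul_smul, halg]⟩
  have hneg : ∀ (s : S K d) (f : F' K d), (((-s) • f : F' K d) : F K d) = - ((s • f : F' K d) : F K d) := by
    intro s f
    apply eq_neg_of_add_eq_zero_left
    rw [← Submodule.coe_add, ← add_smul, neg_add_cancel, zero_smul, Submodule.coe_zero]
  have := fin_F' K d hu hv
  obtain ⟨D, hD, hDx⟩ := exists_der K d
    (fun j => if j.2 = 0 then xb K d (j.1, 1) else 0)
  obtain ⟨H, hH, hHx⟩ := exists_der K d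
    (fun j => if j.2 = 0 then xb K d j else - xb K d j)
  have hδ : Leib δ := hder
  let fS : Derivation K (S K d) (S K d) := mkDerivation K
    (Sum.elim (fun j => if j.2 = 0 then X (Sum.inl (j.1, 1)) else 0)
      (fun j => if j.2 = 0 then X (Sum.inr (j.1, 1)) else 0))
  let hS : Derivation K (S K d) (S K d) := mkDerivation K
    (Sum.elim (fun j => if j.2 = 0 then X (Sum.inl j) else - X (Sum.inl j))
      (fun j => if j.2 = 0 then X (Sum.inr j) else - X (Sum.inr j)))
  have GF : Good δ D H := by
    refine good_of_gen hδ hD hH (adjoin_xb K d) ?_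
    rintro _ ⟨⟨i, j⟩, rfl⟩
    fin_cases j
    · left; exact ⟨xb K d (i, 1), by simp [hδ0, hδ1, hDx, hHx]⟩
    · right; exact ⟨xb K d (i, 0), by simp [hδ0, hδ1, hDx, hHx]⟩
  have GS : Good (K := K) (δS : S K d →ₗ[K] S K d) (fS : S K d →ₗ[K] S K d)
      (hS : S K d →ₗ[K] S K d) := by
    refine good_of_gen (leib_der K _) (leib_der K _) (leib_der K _) (X := Set.range X)
      (adjoin_range_X) ?_
    rintro _ ⟨⟨i, j⟩ | ⟨i, j⟩, rfl⟩
    · fin_cases j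
      · left; exact ⟨X (Sum.inl (i, 1)), by simp [hSu0, hSu1, fS, hS, mkDerivation_X]⟩
      · right; exact ⟨X (Sum.inl (i, 0)), by simp [hSu0, hSu1, fS, hS, mkDerivation_X]⟩
    · fin_cases j
      · left; exact ⟨X (Sum.inr (i, 1)), by simp [hSv0, hSv1, fS, hS, mkDerivation_X]⟩
      · right; exact ⟨X (Sum.inr (i, 0)), by simp [hSv0, hSv1, fS, hS, mkDerivation_X]⟩
  have GM := good_restrict GF (F' K d) (F'_stable K d hδ) (F'_stable K d hD) (F'_stable K d hH)
  obtain ⟨k, g, hg⟩ := abstract_main GS GM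
    (mod_leib K d hu hv hδ δS
      (by rintro ⟨i, j⟩ f
          fin_cases j
          · simp [hδ0, hSu0]
          · simp [hδ1, hSu1, hu])
      (by rintro ⟨i, j⟩ f
          fin_cases j
          · simp [hδ0, hSv0]
          · simp [hδ1, hSv1, hv]))
    (mod_leib K d hu hv hD fS
      (by rintro ⟨i, j⟩ f
          fin_cases j
          · simp [fS, mkDerivation_X, hDx, hu]
          · simp [fS, mkDerivation_X, hDx, hu])
      (by rintro ⟨i, j⟩ f
          fin_cases j
          · simp [fS, mkDerivation_X, hDx, hv]
          · simp [fS, mkDerivation_X, hDx, hv]))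
    (mod_leib K d hu hv hH hS
      (by rintro ⟨i, j⟩ f
          fin_cases j
          · simp [hS, mkDerivation_X, hHx, hu]
          · simp [hS, mkDerivation_X, hHx, hu, hneg]
            exact (neg_mul (xb K d (i, 1)) (f : F K d)).symm)
      (by rintro ⟨i, j⟩ f
          fin_cases j
          · simp [hS, mkDerivation_X, hHx, hv]
          · simp [hS, mkDerivation_X, hHx, hv, hneg]
            exact ring_id5 _ _))
  refine ⟨k, g, fun f => ?_⟩
  have h1 : δ (f : F K d) = 0 ↔ (δ.restrict (F'_stable K d hδ)) f = 0 := by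
    rw [Subtype.ext_iff]; rfl
  rw [h1]
  exact hg f

end Stmt7
end

section
/- The set M^δ = ker D is a finitely generated module over the ring S^δ = ker δ_S. -/
open MvPolynomial

namespace Stmt8

/-- Index type for `{1, …, 2d}`: `(i, 0)` stands for `2i-1` and `(i, 1)` for `2i`. -/
abbrev ι (d : ℕ) : Type := Fin d × Fin 2

/-- The polynomial ring `S = K[u_1, …, u_{2d}, v_1, …, v_{2d}]`; the variable
`X (Sum.inl j)` is `u_j` and `X (Sum.inr j)` is `v_j`. -/
abbrev S (K : Type) [Field K] (d : ℕ) : Type := MvPolynomial (ι d ⊕ ι d) K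

/-- The free `S`-module `M` with basis `a_1, …, a_{2d}`. -/
abbrev M (K : Type) [Field K] (d : ℕ) : Type := ι d → S K d

/-- The basis element `a_j` of `M`. -/
noncomputable def a (K : Type) [Field K] (d : ℕ) (j : ι d) : M K d := Pi.single j 1


section aux
set_option linter.unusedSectionVars false
set_option linter.unusedSimpArgs false
variable {K : Type} [Field K] {σ J : Type} [Fintype J] [Fintype σ] (e : J ⊕ J ≃ σ)

noncomputable def Lx : Derivation K (MvPolynomial σ K) (MvPolynomial σ K) :=
  ∑ j, (X (e (Sum.inl j)) : MvPolynomial σ K) • pderiv (e (Sum.inl j))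
noncomputable def Ly : Derivation K (MvPolynomial σ K) (MvPolynomial σ K) :=
  ∑ j, (X (e (Sum.inr j)) : MvPolynomial σ K) • pderiv (e (Sum.inr j))
noncomputable def EE : Derivation K (MvPolynomial σ K) (MvPolynomial σ K) :=
  ∑ j, (X (e (Sum.inr j)) : MvPolynomial σ K) • pderiv (e (Sum.inl j))
noncomputable def FF : Derivation K (MvPolynomial σ K) (MvPolynomial σ K) :=
  ∑ j, (X (e (Sum.inl j)) : MvPolynomial σ K) • pderiv (e (Sum.inr j))

theorem sum_app (c : J → MvPolynomial σ K)
    (D : J → Derivation K (MvPolynomial σ K) (MvPolynomial σ K)) (f : MvPolynomial σ K) :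
    (∑ j, c j • D j) f = ∑ j, c j * D j f := by
  have : (∑ j, c j • D j) f = ∑ j, (c j • D j) f := by
    exact congrFun (map_sum (Derivation.coeFnAddMonoidHom (R := K) (A := MvPolynomial σ K)
      (M := MvPolynomial σ K)) (fun j => c j • D j) Finset.univ) f |>.trans (by
        rw [Finset.sum_apply]; rfl)
  rw [this]; simp

theorem d_inl_inl [DecidableEq J] (i j : J) : pderiv (R := K) (e (Sum.inl i)) (X (e (Sum.inl j))) = if i = j then 1 else 0 := by
  classical
  rw [pderiv_X]; simp [Pi.single_apply, eq_comm]
theorem d_inr_inr [DecidableEq J] (i j : J) : pderiv (R := K) (e (Sum.inr i)) (X (e (Sum.inr j))) = if i = j then 1 else 0 := by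
  classical
  rw [pderiv_X]; simp [Pi.single_apply, eq_comm]
theorem d_inl_inr (i j : J) : pderiv (R := K) (e (Sum.inl i)) (X (e (Sum.inr j))) = 0 := by
  classical
  rw [pderiv_X]; simp [Pi.single_apply]
theorem d_inr_inl (i j : J) : pderiv (R := K) (e (Sum.inr i)) (X (e (Sum.inl j))) = 0 := by
  classical
  rw [pderiv_X]; simp [Pi.single_apply]

theorem Lx_x (j : J) : Lx (K := K) e (X (e (Sum.inl j))) = X (e (Sum.inl j)) := by
  classical simp [Lx, sum_app, d_inl_inl, -pderiv_X]
theorem Lx_y (j : J) : Lx (K := K) e (X (e (Sum.inr j))) = 0 := by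
  classical simp [Lx, sum_app, d_inl_inr, -pderiv_X]
theorem Ly_x (j : J) : Ly (K := K) e (X (e (Sum.inl j))) = 0 := by
  classical simp [Ly, sum_app, d_inr_inl, -pderiv_X]
theorem Ly_y (j : J) : Ly (K := K) e (X (e (Sum.inr j))) = X (e (Sum.inr j)) := by
  classical simp [Ly, sum_app, d_inr_inr, -pderiv_X]
theorem EE_x (j : J) : EE (K := K) e (X (e (Sum.inl j))) = X (e (Sum.inr j)) := by
  classical simp [EE, sum_app, d_inl_inl, -pderiv_X]
theorem EE_y (j : J) : EE (K := K) e (X (e (Sum.inr j))) = 0 := by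
  classical simp [EE, sum_app, d_inl_inr, -pderiv_X]
theorem FF_x (j : J) : FF (K := K) e (X (e (Sum.inl j))) = 0 := by
  classical simp [FF, sum_app, d_inr_inl, -pderiv_X]
theorem FF_y (j : J) : FF (K := K) e (X (e (Sum.inr j))) = X (e (Sum.inl j)) := by
  classical simp [FF, sum_app, d_inr_inr, -pderiv_X]

theorem ext_e {D₁ D₂ : Derivation K (MvPolynomial σ K) (MvPolynomial σ K)}
    (hx : ∀ j, D₁ (X (e (Sum.inl j))) = D₂ (X (e (Sum.inl j))))
    (hy : ∀ j, D₁ (X (e (Sum.inr j))) = D₂ (X (e (Sum.inr j)))) : D₁ = D₂ := by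
  apply MvPolynomial.derivation_ext
  intro s
  obtain ⟨t, rfl⟩ := e.surjective s
  rcases t with j | j
  · exact hx j
  · exact hy j

theorem br_EF (f : MvPolynomial σ K) : EE e (FF e f) = FF e (EE e f) + (Ly e f - Lx e f) := by
  have : ⁅EE (K := K) e, FF (K := K) e⁆ = Ly e - Lx e := by
    apply ext_e e <;> intro j <;>
      simp [-pderiv_X, Derivation.commutator_apply, Lx_x, Lx_y, Ly_x, Ly_y, EE_x, EE_y, FF_x, FF_y]
  have := DFunLike.congr_fun this f
  rw [Derivation.commutator_apply, Derivation.sub_apply] at this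
  linear_combination this

theorem br_LxE (f : MvPolynomial σ K) : Lx e (EE e f) = EE e (Lx e f) - EE e f := by
  have : ⁅Lx (K := K) e, EE (K := K) e⁆ = - EE e := by
    apply ext_e e <;> intro j <;>
      simp [-pderiv_X, Derivation.commutator_apply, Lx_x, Lx_y, Ly_x, Ly_y, EE_x, EE_y, FF_x, FF_y]
  have := DFunLike.congr_fun this f
  rw [Derivation.commutator_apply, Derivation.neg_apply] at this
  linear_combination this
theorem br_LyE (f : MvPolynomial σ K) : Ly e (EE e f) = EE e (Ly e f) + EE e f := by
  have : ⁅Ly (K := K) e, EE (K := K) e⁆ = EE e := by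
    apply ext_e e <;> intro j <;>
      simp [-pderiv_X, Derivation.commutator_apply, Lx_x, Lx_y, Ly_x, Ly_y, EE_x, EE_y, FF_x, FF_y]
  have := DFunLike.congr_fun this f
  rw [Derivation.commutator_apply] at this
  linear_combination this
theorem br_LxF (f : MvPolynomial σ K) : Lx e (FF e f) = FF e (Lx e f) + FF e f := by
  have : ⁅Lx (K := K) e, FF (K := K) e⁆ = FF e := by
    apply ext_e e <;> intro j <;>
      simp [-pderiv_X, Derivation.commutator_apply, Lx_x, Lx_y, Ly_x, Ly_y, EE_x, EE_y, FF_x, FF_y]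
  have := DFunLike.congr_fun this f
  rw [Derivation.commutator_apply] at this
  linear_combination this
theorem br_LyF (f : MvPolynomial σ K) : Ly e (FF e f) = FF e (Ly e f) - FF e f := by
  have : ⁅Ly (K := K) e, FF (K := K) e⁆ = - FF e := by
    apply ext_e e <;> intro j <;>
      simp [-pderiv_X, Derivation.commutator_apply, Lx_x, Lx_y, Ly_x, Ly_y, EE_x, EE_y, FF_x, FF_y]
  have := DFunLike.congr_fun this f
  rw [Derivation.commutator_apply, Derivation.neg_apply] at this
  linear_combination this
theorem br_Epx (i : J) (f : MvPolynomial σ K) :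
    EE e (pderiv (e (Sum.inl i)) f) = pderiv (e (Sum.inl i)) (EE e f) := by
  classical
  have : ⁅EE (K := K) e, pderiv (R := K) (e (Sum.inl i))⁆ = 0 := by
    apply ext_e e <;> intro j <;>
      simp [-pderiv_X, Derivation.commutator_apply, EE_x, EE_y, d_inl_inl, d_inl_inr, apply_ite]
  have := DFunLike.congr_fun this f
  rw [Derivation.commutator_apply, Derivation.zero_apply] at this
  linear_combination this
theorem br_Epy (i : J) (f : MvPolynomial σ K) :
    EE e (pderiv (e (Sum.inr i)) f) = pderiv (e (Sum.inr i)) (EE e f)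
      - pderiv (e (Sum.inl i)) f := by
  classical
  have : ⁅EE (K := K) e, pderiv (R := K) (e (Sum.inr i))⁆ = - pderiv (e (Sum.inl i)) := by
    apply ext_e e <;> intro j <;>
      simp [-pderiv_X, Derivation.commutator_apply, EE_x, EE_y, d_inl_inl, d_inl_inr, d_inr_inl, d_inr_inr, apply_ite]
  have := DFunLike.congr_fun this f
  rw [Derivation.commutator_apply, Derivation.neg_apply] at this
  linear_combination this
theorem br_Lxpx (i : J) (f : MvPolynomial σ K) :
    Lx e (pderiv (e (Sum.inl i)) f) = pderiv (e (Sum.inl i)) (Lx e f)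
      - pderiv (e (Sum.inl i)) f := by
  classical
  have : ⁅Lx (K := K) e, pderiv (R := K) (e (Sum.inl i))⁆ = - pderiv (e (Sum.inl i)) := by
    apply ext_e e <;> intro j <;>
      simp [-pderiv_X, Derivation.commutator_apply, Lx_x, Lx_y, d_inl_inl, d_inl_inr, d_inr_inl, d_inr_inr, apply_ite]
  have := DFunLike.congr_fun this f
  rw [Derivation.commutator_apply, Derivation.neg_apply] at this
  linear_combination this
theorem br_Lypx (i : J) (f : MvPolynomial σ K) :
    Ly e (pderiv (e (Sum.inl i)) f) = pderiv (e (Sum.inl i)) (Ly e f) := by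
  classical
  have : ⁅Ly (K := K) e, pderiv (R := K) (e (Sum.inl i))⁆ = 0 := by
    apply ext_e e <;> intro j <;>
      simp [-pderiv_X, Derivation.commutator_apply, Ly_x, Ly_y, d_inl_inl, d_inl_inr, d_inr_inl, d_inr_inr, apply_ite]
  have := DFunLike.congr_fun this f
  rw [Derivation.commutator_apply, Derivation.zero_apply] at this
  linear_combination this

/-- joint eigenvectors -/
def Eig (m : ℤ × ℤ) (f : MvPolynomial σ K) : Prop :=
  Lx e f = (m.1 : K) • f ∧ Ly e f = (m.2 : K) • f

theorem Eig.E {m : ℤ × ℤ} {f : MvPolynomial σ K} (h : Eig e m f) :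
    Eig e (m + (-1, 1)) (EE e f) := by
  refine ⟨?_, ?_⟩
  · rw [br_LxE, h.1, Derivation.map_smul]; push_cast [Prod.fst_add]; module
  · rw [br_LyE, h.2, Derivation.map_smul]; push_cast [Prod.snd_add]; module
theorem Eig.F {m : ℤ × ℤ} {f : MvPolynomial σ K} (h : Eig e m f) :
    Eig e (m + (1, -1)) (FF e f) := by
  refine ⟨?_, ?_⟩
  · rw [br_LxF, h.1, Derivation.map_smul]; push_cast [Prod.fst_add]; module
  · rw [br_LyF, h.2, Derivation.map_smul]; push_cast [Prod.snd_add]; module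
theorem Eig.px {m : ℤ × ℤ} {f : MvPolynomial σ K} (h : Eig e m f) (i : J) :
    Eig e (m + (-1, 0)) (pderiv (e (Sum.inl i)) f) := by
  refine ⟨?_, ?_⟩
  · rw [br_Lxpx, h.1, Derivation.map_smul]; push_cast [Prod.fst_add]; module
  · rw [br_Lypx, h.2, Derivation.map_smul]; push_cast [Prod.snd_add]; module
theorem Eig.EF {m : ℤ × ℤ} {f : MvPolynomial σ K} (h : Eig e m f) :
    EE e (FF e f) = FF e (EE e f) + ((m.2 : K) - m.1) • f := by
  rw [br_EF, h.1, h.2]; module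

/-- The key step for highest weight vectors of positive weight. -/
theorem key [CharZero K] {p q : ℤ} {f : MvPolynomial σ K} (h : Eig e (p, q) f) (hE : EE e f = 0)
    (hq : 0 ≤ q) (hw : 0 < q - p) :
    ∃ c : J → MvPolynomial σ K, (∀ j, EE e (c j) = 0) ∧ f = ∑ j, X (e (Sum.inr j)) * c j := by
  have hw1 : ((q : K) - p + 1) ≠ 0 := by
    have : (q - p + 1 : ℤ) ≠ 0 := by omega
    exact_mod_cast this
  have hw0 : ((q : K) - p) ≠ 0 := by
    have : (q - p : ℤ) ≠ 0 := by omega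
    exact_mod_cast this
  have hq1 : ((q : K) + 1) ≠ 0 := by
    have : (q + 1 : ℤ) ≠ 0 := by omega
    exact_mod_cast this
  set l : K := ((q : K) - p + 1)⁻¹ with hl
  set r : K := (q : K) - l * p with hr
  have hr0 : r ≠ 0 := by
    have : r = ((q : K) + 1) * (q - p) * l := by
      rw [hr, hl]; field_simp; ring
    rw [this]; exact mul_ne_zero (mul_ne_zero hq1 hw0) (inv_ne_zero hw1)
  let c₀ : J → MvPolynomial σ K := fun j =>
    pderiv (e (Sum.inr j)) f + l • FF e (pderiv (e (Sum.inl j)) f)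
  refine ⟨fun j => r⁻¹ • c₀ j, fun j => ?_, ?_⟩
  · have h1 := (h.px e j).EF e
    rw [br_Epx, hE, map_zero, map_zero, zero_add] at h1
    rw [Derivation.map_smul]
    simp only [c₀]
    rw [map_add, Derivation.map_smul, h1, br_Epy, hE, map_zero, smul_smul]
    have : l * ((((p, q) + (-1, 0) : ℤ × ℤ).2 : K) - (((p, q) + (-1, 0) : ℤ × ℤ).1 : ℤ)) = 1 := by
      push_cast [Prod.fst_add, Prod.snd_add]
      rw [hl, inv_mul_eq_one₀ hw1]; ring
    rw [this]; simp
  · have hsum : ∑ j, X (e (Sum.inr j)) * c₀ j = r • f := by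
      have h1 : ∑ j, X (e (Sum.inr j)) * pderiv (e (Sum.inr j)) f = (q : K) • f := by
        rw [← h.2, Ly, sum_app]
      have h2 : ∑ j, X (e (Sum.inr j)) * FF e (pderiv (e (Sum.inl j)) f) = - ((p : K) • f) := by
        have h3 : FF e (EE e f) = ∑ j, (X (e (Sum.inr j)) * FF e (pderiv (e (Sum.inl j)) f) +
            X (e (Sum.inl j)) * (pderiv (e (Sum.inl j)) f)) := by
          conv_lhs => rw [EE, sum_app, map_sum]
          refine Finset.sum_congr rfl fun j _ => ?_
          rw [Derivation.leibniz, FF_y]; simp [mul_comm]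
        have h4 : (p : K) • f = ∑ j, X (e (Sum.inl j)) * (pderiv (e (Sum.inl j)) f) := by
          rw [← h.1, Lx, sum_app]
        rw [hE, map_zero, Finset.sum_add_distrib, ← h4] at h3
        linear_combination -h3
      simp only [c₀, mul_add, Finset.sum_add_distrib, mul_smul_comm, ← Finset.smul_sum, h1, h2]
      rw [hr]; module
    simp only [mul_smul_comm, ← Finset.smul_sum, hsum, smul_smul]
    rw [inv_mul_cancel₀ hr0, one_smul]

/-- weights -/
def W (s : σ) : ℤ × ℤ := Sum.elim (fun _ => (1, 0)) (fun _ => (0, 1)) (e.symm s)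

theorem weight_eq (t : σ →₀ ℕ) : Finsupp.weight (W e) t =
    (∑ j, (t (e (Sum.inl j)) : ℤ), ∑ j, (t (e (Sum.inr j)) : ℤ)) := by
  rw [Finsupp.weight_apply, Finsupp.sum_fintype _ _ (by simp), ← e.sum_comp,
    Fintype.sum_sum_type]
  ext <;> simp [W, Prod.fst_sum, Prod.snd_sum]

theorem eig_monomial (t : σ →₀ ℕ) (a : K) : Eig e (Finsupp.weight (W e) t) (monomial t a) := by
  rw [weight_eq]
  constructor
  · rw [Lx, sum_app]; simp only [X_mul_pderiv_monomial]
    push_cast; rw [Finset.sum_smul]; simp only [Nat.cast_smul_eq_nsmul]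
  · rw [Ly, sum_app]; simp only [X_mul_pderiv_monomial]
    push_cast; rw [Finset.sum_smul]; simp only [Nat.cast_smul_eq_nsmul]

theorem coeff_L (f : MvPolynomial σ K) (t : σ →₀ ℕ) :
    coeff t (Lx e f) = ((Finsupp.weight (W e) t).1 : K) * coeff t f ∧
    coeff t (Ly e f) = ((Finsupp.weight (W e) t).2 : K) * coeff t f := by
  classical
  induction f using MvPolynomial.induction_on' with
  | monomial u a =>
    rw [(eig_monomial e u a).1, (eig_monomial e u a).2]
    simp only [coeff_smul, coeff_monomial, smul_eq_mul]
    by_cases h : u = t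
    · subst h; simp
    · simp [h]
  | add p q hp hq => simp [hp, hq, mul_add]

theorem Eig.weight [CharZero K] {m : ℤ × ℤ} {f : MvPolynomial σ K} (h : Eig e m f) (t : σ →₀ ℕ)
    (ht : coeff t f ≠ 0) : Finsupp.weight (W e) t = m := by
  have := coeff_L e f t
  rw [h.1, h.2] at this
  simp only [coeff_smul, smul_eq_mul, mul_eq_mul_right_iff, ht, or_false, Int.cast_inj] at this
  exact Prod.ext this.1.symm this.2.symm

theorem Eig.neg [CharZero K] {m : ℤ × ℤ} {f : MvPolynomial σ K} (h : Eig e m f) (hm : m.2 < 0) :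
    f = 0 := by
  ext t
  by_contra ht
  have := h.weight e t ht
  rw [weight_eq] at this
  rw [← this] at hm
  have : 0 ≤ ∑ j, (t (e (Sum.inr j)) : ℤ) := by positivity
  simp only at hm
  omega

theorem pr_E [CharZero K] (m : ℤ × ℤ) (f : MvPolynomial σ K) :
    weightedHomogeneousComponent (W e) (m + (-1, 1)) (EE e f) =
      EE e (weightedHomogeneousComponent (W e) m f) := by
  classical
  induction f using MvPolynomial.induction_on' with
  | monomial u a =>
    have h1 := (eig_monomial e u a)
    by_cases h : Finsupp.weight (W e) u = m
    · rw [weightedHomogeneousComponent_of_mem (m := m) (by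
        exact (isWeightedHomogeneous_monomial _ _ _ h)), if_pos rfl]
      ext t
      rw [coeff_weightedHomogeneousComponent]
      split_ifs with h2
      · rfl
      · by_contra h3
        exact h2 ((h1.E e).weight e t (Ne.symm h3) |>.trans (by rw [h]))
    · have h0 : weightedHomogeneousComponent (W e) m (monomial u a) = 0 := by
        ext t
        rw [coeff_weightedHomogeneousComponent, coeff_monomial]
        split_ifs with h2 h3
        · subst h3; exact absurd h2 h
        · simp
        · simp
      rw [h0, map_zero]
      ext t
      rw [coeff_weightedHomogeneousComponent]
      split_ifs with h2
      · by_contra h3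
        have := (h1.E e).weight e t h3
        rw [h2] at this
        exact h (add_right_cancel this).symm
      · simp
  | add p q hp hq => simp [hp, hq]

theorem eig_pr (m : ℤ × ℤ) (f : MvPolynomial σ K) :
    Eig e m (weightedHomogeneousComponent (W e) m f) := by
  classical
  constructor <;> ext t
  · rw [(coeff_L e _ t).1, coeff_smul, coeff_weightedHomogeneousComponent]
    split_ifs with h <;> simp [h]
  · rw [(coeff_L e _ t).2, coeff_smul, coeff_weightedHomogeneousComponent]
    split_ifs with h <;> simp [h]

/-- commutation with powers of F -/
theorem EFk {m : ℤ × ℤ} {g : MvPolynomial σ K} (h : Eig e m g) (hF : FF e (EE e g) = 0) (k : ℕ) :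
    Eig e (m + ((k : ℤ), -(k : ℤ))) ((FF e)^[k] g) ∧
    EE e ((FF e)^[k+1] g) = (((k : K) + 1) * ((m.2 : K) - m.1 - k)) • (FF e)^[k] g := by
  induction k with
  | zero =>
    refine ⟨by simpa [← Prod.zero_eq_mk] using h, ?_⟩
    simp [h.EF e, hF]
  | succ k ih =>
    have h1 : Eig e (m + (((k + 1 : ℕ) : ℤ), -((k + 1 : ℕ) : ℤ))) ((FF e)^[k+1] g) := by
      rw [Function.iterate_succ_apply']
      convert ih.1.F e using 1
      ext <;> simp <;> ring
    refine ⟨h1, ?_⟩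
    rw [Function.iterate_succ_apply', h1.EF e, ih.2, Derivation.map_smul,
      ← Function.iterate_succ_apply' (FF e)]
    push_cast [Prod.fst_add, Prod.snd_add]
    module

theorem vanish [CharZero K] {m : ℤ × ℤ} {g : MvPolynomial σ K} (h : Eig e m g)
    (hF : FF e (EE e g) = 0) (hm : m.2 - m.1 < 0) : g = 0 := by
  have hdown : ∀ k : ℕ, (FF e)^[k] g = 0 → g = 0 := by
    intro k
    induction k with
    | zero => intro h; simpa using h
    | succ k ih =>
      intro h0
      apply ih
      have := (EFk e h hF k).2
      rw [h0, map_zero, eq_comm, smul_eq_zero] at this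
      rcases this with h2 | h2
      · exfalso
        have h3 : (((k : ℤ) + 1) * (m.2 - m.1 - k) : ℤ) = 0 := by exact_mod_cast h2
        rcases mul_eq_zero.1 h3 with h4 | h4 <;> omega
      · exact h2
  apply hdown (m.2.toNat + 1)
  apply (EFk e h hF _).1.neg e
  simp only [Prod.snd_add]
  push_cast
  omega

theorem eig_case [CharZero K] {m : ℤ × ℤ} {g : MvPolynomial σ K} (h : Eig e m g)
    (hE : EE e (EE e g) = 0) :
    ∃ c : J → MvPolynomial σ K, (∀ j, EE e (c j) = 0) ∧
      EE e g = ∑ j, X (e (Sum.inr j)) * c j := by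
  by_cases h0 : EE e g = 0
  · exact ⟨0, by simp, by simp [h0]⟩
  have hf := h.E e
  rcases lt_trichotomy (0 : ℤ) (m.2 + 1 - (m.1 - 1)) with hw | hw | hw
  · apply key e (p := m.1 - 1) (q := m.2 + 1) hf hE _ hw
    by_contra hq
    exact h0 (hf.neg e (by simp only [Prod.snd_add]; omega))
  · exfalso
    apply h0
    have h1 : EE e (FF e (EE e g)) = 0 := by
      rw [hf.EF e, hE, map_zero, zero_add]
      have : (((m + (-1, 1)).2 : ℤ) : K) - (m + (-1, 1)).1 = 0 := by
        rw [← Int.cast_sub, Int.cast_eq_zero]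
        simp only [Prod.snd_add, Prod.fst_add]; omega
      rw [this, zero_smul]
    have h2 : FF e (EE e g) = 0 := vanish e (hf.F e) (by rw [h1, map_zero])
      (by simp only [Prod.snd_add, Prod.fst_add]; omega)
    rw [vanish e h h2 (by omega), map_zero]
  · exfalso
    exact h0 (vanish e hf (by rw [hE, map_zero]) (by simp only [Prod.snd_add, Prod.fst_add]; omega))

theorem main_case [CharZero K] (g : MvPolynomial σ K) (hE : EE e (EE e g) = 0) :
    ∃ c : J → MvPolynomial σ K, (∀ j, EE e (c j) = 0) ∧
      EE e g = ∑ j, X (e (Sum.inr j)) * c j := by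
  have hcomp : ∀ m, EE e (EE e (weightedHomogeneousComponent (W e) m g)) = 0 := by
    intro m; rw [← pr_E, ← pr_E, hE, map_zero]
  rw [← finsum_weightedHomogeneousComponent (w := W e) g]
  apply finsum_induction (fun g' => ∃ c : J → MvPolynomial σ K, (∀ j, EE e (c j) = 0) ∧
      EE e g' = ∑ j, X (e (Sum.inr j)) * c j)
  · exact ⟨0, by simp, by simp⟩
  · rintro x y ⟨c, hc, hx⟩ ⟨c', hc', hy⟩
    exact ⟨c + c', by simp [hc, hc'], by simp [hx, hy, mul_add, Finset.sum_add_distrib]⟩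
  · intro m
    exact eig_case e (eig_pr e m g) (hcomp m)

end aux

/-- reindexing -/
def e0 (d : ℕ) : (Fin d ⊕ Fin d) ⊕ (Fin d ⊕ Fin d) ≃ ι d ⊕ ι d where
  toFun := Sum.elim (Sum.elim (fun i => Sum.inl (i, 1)) (fun i => Sum.inr (i, 1)))
    (Sum.elim (fun i => Sum.inl (i, 0)) (fun i => Sum.inr (i, 0)))
  invFun := Sum.elim
    (fun p => if p.2 = 0 then Sum.inr (Sum.inl p.1) else Sum.inl (Sum.inl p.1))
    (fun p => if p.2 = 0 then Sum.inr (Sum.inr p.1) else Sum.inl (Sum.inr p.1))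
  left_inv := by rintro ((i | i) | (i | i)) <;> simp
  right_inv := by
    rintro (⟨i, j⟩ | ⟨i, j⟩) <;> fin_cases j <;> simp

/-- `M^δ = ker D` is a finitely generated module over `S^δ = ker δ_S`, where `D` is the
`K`-linear map on `M` with `D(f·a_{2i-1}) = δ_S(f)·a_{2i-1}` and
`D(f·a_{2i}) = δ_S(f)·a_{2i} + f·a_{2i-1}`. -/
theorem stmt8 (K : Type) [Field K] [CharZero K] (d : ℕ) (hd : 1 ≤ d)
    (δS : Derivation K (S K d) (S K d))
    (hSu0 : ∀ i : Fin d, δS (X (Sum.inl (i, 0))) = 0)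
    (hSu1 : ∀ i : Fin d, δS (X (Sum.inl (i, 1))) = X (Sum.inl (i, 0)))
    (hSv0 : ∀ i : Fin d, δS (X (Sum.inr (i, 0))) = 0)
    (hSv1 : ∀ i : Fin d, δS (X (Sum.inr (i, 1))) = X (Sum.inr (i, 0)))
    (D : M K d →ₗ[K] M K d)
    (hD0 : ∀ (f : S K d) (i : Fin d),
      D (f • a K d (i, 0)) = δS f • a K d (i, 0))
    (hD1 : ∀ (f : S K d) (i : Fin d),
      D (f • a K d (i, 1)) = δS f • a K d (i, 1) + f • a K d (i, 0)) :
    ∃ (k : ℕ) (g : Fin k → M K d),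
      ∀ m : M K d,
        D m = 0 ↔ ∃ c : Fin k → S K d, (∀ l, δS (c l) = 0) ∧ m = ∑ l, c l • g l := by
  have hδ : δS = EE (e0 d) := by
    apply ext_e (e0 d)
    · rintro (i | i) <;> rw [EE_x] <;> simp [e0, hSu1, hSv1]
    · rintro (i | i) <;> rw [EE_y] <;> simp [e0, hSu0, hSv0]
  set E := e0 d with hE
  have hdec : ∀ m : M K d, m = ∑ i, (m (i, 0) • a K d (i, 0) + m (i, 1) • a K d (i, 1)) := by
    intro m
    conv_lhs => rw [pi_eq_sum_univ' m]
    rw [Fintype.sum_prod_type]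
    refine Finset.sum_congr rfl fun i _ => ?_
    rw [Fin.sum_univ_two]
    congr 2 <;> ext j : 1 <;> simp [a, Pi.single_apply, eq_comm]
  have hDm : ∀ m : M K d, D m = ∑ i, ((δS (m (i, 0)) + m (i, 1)) • a K d (i, 0)
      + δS (m (i, 1)) • a K d (i, 1)) := by
    intro m
    conv_lhs => rw [hdec m]
    rw [map_sum]
    refine Finset.sum_congr rfl fun i _ => ?_
    rw [map_add, hD0, hD1]; module
  have ev0 : ∀ (p q : Fin d → S K d) (i : Fin d),
      (∑ i, (p i • a K d (i, 0) + q i • a K d (i, 1))) (i, 0) = p i := by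
    intro p q i
    simp [Finset.sum_apply, a, Pi.single_apply]
  have ev1 : ∀ (p q : Fin d → S K d) (i : Fin d),
      (∑ i, (p i • a K d (i, 0) + q i • a K d (i, 1))) (i, 1) = q i := by
    intro p q i
    simp [Finset.sum_apply, a, Pi.single_apply]
  have hDsmul : ∀ (c : S K d) (m : M K d), δS c = 0 → D (c • m) = c • D m := by
    intro c m hc
    rw [hDm, hDm, Finset.smul_sum]
    refine Finset.sum_congr rfl fun i _ => ?_
    simp only [Pi.smul_apply, smul_eq_mul, Derivation.leibniz, hc]
    module
  let T := Fin d × Option (Fin d ⊕ Fin d)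
  let G : T → M K d := fun t => match t with
    | (i, none) => a K d (i, 0)
    | (i, some j) => (X (E (Sum.inl j)) : S K d) • a K d (i, 0)
        - (X (E (Sum.inr j)) : S K d) • a K d (i, 1)
  have hG : ∀ t, D (G t) = 0 := by
    rintro ⟨i, _ | j⟩
    · have := hD0 1 i
      simpa [G] using this
    · simp only [G]
      rw [map_sub, hD0, hD1, hδ, EE_x, EE_y]; simp
  have main : ∀ m : M K d, D m = 0 ↔ ∃ c : T → S K d, (∀ l, δS (c l) = 0) ∧
      m = ∑ l, c l • G l := by
    intro m
    constructor
    · intro hm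
      rw [hDm] at hm
      have h0 : ∀ i, δS (m (i, 0)) + m (i, 1) = 0 := by
        intro i
        have := congrFun hm (i, 0)
        rwa [ev0 (fun i => δS (m (i, 0)) + m (i, 1)) (fun i => δS (m (i, 1)))] at this
      have h1 : ∀ i, δS (m (i, 1)) = 0 := by
        intro i
        have := congrFun hm (i, 1)
        rwa [ev1 (fun i => δS (m (i, 0)) + m (i, 1)) (fun i => δS (m (i, 1)))] at this
      have h2 : ∀ i, ∃ c : Fin d ⊕ Fin d → S K d, (∀ j, δS (c j) = 0) ∧
          δS (m (i, 0)) = ∑ j, X (E (Sum.inr j)) * c j := by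
        intro i
        rw [hδ]
        apply main_case
        rw [← hδ, eq_neg_of_add_eq_zero_left (h0 i), map_neg, h1, neg_zero]
      choose c hc hs using h2
      refine ⟨fun t => match t with
        | (i, none) => m (i, 0) - ∑ j, X (E (Sum.inl j)) * c i j
        | (i, some j) => c i j, ?_, ?_⟩
      · rintro ⟨i, _ | j⟩
        · simp only [map_sub, map_sum, Derivation.leibniz, hc, hs, smul_eq_mul]
          rw [sub_eq_zero]
          refine Finset.sum_congr rfl fun j _ => ?_
          rw [hδ, EE_x]; ring
        · exact hc i j
      · rw [hdec m, Fintype.sum_prod_type]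
        refine Finset.sum_congr rfl fun i _ => ?_
        rw [Fintype.sum_option]
        simp only [G, ← hdec m]
        rw [eq_neg_of_add_eq_zero_right (h0 i), hs]
        simp only [smul_sub, Finset.sum_sub_distrib, smul_smul, sub_smul, neg_smul, Finset.sum_smul,
          mul_comm (c i _)]
        abel
    · rintro ⟨c, hc, rfl⟩
      rw [map_sum]
      exact Finset.sum_eq_zero fun l _ => by rw [hDsmul _ _ (hc l), hG, smul_zero]
  let φ := Fintype.equivFin T
  refine ⟨Fintype.card T, fun l => G (φ.symm l), fun m => (main m).trans ⟨?_, ?_⟩⟩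
  · rintro ⟨c, hc, rfl⟩
    exact ⟨fun l => c (φ.symm l), fun l => hc _, (φ.symm.sum_comp (fun t => c t • G t)).symm⟩
  · rintro ⟨c, hc, rfl⟩
    refine ⟨fun t => c (φ t), fun l => hc _, ?_⟩
    rw [← φ.symm.sum_comp]; simp

end Stmt8
end

section
/- For all a, b, c, e ∈ A one has [a,b][c,e] = −[a,c][b,e]. -/
/-- In a unital associative `K`-algebra `A` (over a field `K` of characteristic `0`) in
which `[[a,b],c] = 0` for all `a, b, c` (where `[a,b] = ab - ba`), one has
`[a,b][c,e] = -[a,c][b,e]` for all `a, b, c, e ∈ A`. -/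
theorem stmt12 (K : Type*) [Field K] [CharZero K] (A : Type*) [Ring A] [Algebra K A]
    (h : ∀ a b c : A, (a * b - b * a) * c - c * (a * b - b * a) = 0) :
    ∀ a b c e : A,
      (a * b - b * a) * (c * e - e * c) = -((a * c - c * a) * (b * e - e * b)) := by
  intro a b c e
  have key : (a * b - b * a) * (c * e - e * c) + (a * c - c * a) * (b * e - e * b)
      = ((a * (b * c) - (b * c) * a) * e - e * (a * (b * c) - (b * c) * a))
        - ((a * b - b * a) * e - e * (a * b - b * a)) * c
        - b * ((a * c - c * a) * e - e * (a * c - c * a))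
        + ((a * c - c * a) * (b * e - e * b) - (b * e - e * b) * (a * c - c * a)) := by
    noncomm_ring
  rw [h, h, h, h] at key
  apply eq_neg_of_add_eq_zero_left
  simpa using key
end

section
/- For every s ≥ d, every element of W_s and every element of Z_s is equal to 0 in F. -/
namespace Stmt15

/-- The relation imposing the identity `[[a,b],c] = 0` (commutators are central) on the
free unital associative algebra; the quotient `RingQuot` by it is the relatively free
algebra of rank `2d` of the variety generated by the infinite-dimensional Grassmann
algebra.  The generator `Sum.inl i` is `x_{i+1}` and `Sum.inr i` is `y_{i+1}`. -/
def grRel (K : Type) [Field K] (d : ℕ) :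
    FreeAlgebra K (Fin d ⊕ Fin d) → FreeAlgebra K (Fin d ⊕ Fin d) → Prop := fun p q =>
  q = 0 ∧ ∃ a b c : FreeAlgebra K (Fin d ⊕ Fin d),
    p = (a * b - b * a) * c - c * (a * b - b * a)

/-- The relatively free algebra `F = F_{2d}(𝒢)`. -/
abbrev F (K : Type) [Field K] (d : ℕ) : Type := RingQuot (grRel K d)

/-- The generator `x_i` of `F`. -/
noncomputable def x (K : Type) [Field K] (d : ℕ) (i : Fin d) : F K d :=
  RingQuot.mkAlgHom K (grRel K d) (FreeAlgebra.ι K (Sum.inl i))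

/-- The generator `y_i` of `F`. -/
noncomputable def y (K : Type) [Field K] (d : ℕ) (i : Fin d) : F K d :=
  RingQuot.mkAlgHom K (grRel K d) (FreeAlgebra.ι K (Sum.inr i))

/-- `v_{ij} = x_i y_j - y_i x_j`. -/
noncomputable def v (K : Type) [Field K] (d : ℕ) (i j : Fin d) : F K d :=
  x K d i * y K d j - y K d i * x K d j

/-- `w_{ijk} = y_i [x_j, x_k] - x_i [y_j, x_k]`. -/
noncomputable def w (K : Type) [Field K] (d : ℕ) (i j k : Fin d) : F K d :=
  y K d i * (x K d j * x K d k - x K d k * x K d j) -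
    x K d i * (y K d j * x K d k - x K d k * y K d j)

/-- `z_{ijkl} = y_i [x_j, v_{kl}] - x_i [y_j, v_{kl}]`. -/
noncomputable def z (K : Type) [Field K] (d : ℕ) (i j k l : Fin d) : F K d :=
  y K d i * (x K d j * v K d k l - v K d k l * x K d j) -
    x K d i * (y K d j * v K d k l - v K d k l * y K d j)

/-- The set `V = {v_{ij} : 1 ≤ i, j ≤ d}`. -/
def Vset (K : Type) [Field K] (d : ℕ) : Set (F K d) :=
  {f | ∃ i j : Fin d, f = v K d i j}

/-- The sets `W_s`: `W_0 = {w_{ijk} : i ≤ j ≤ k}` and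
`W_s = {y_i [x_j, w] - x_i [y_j, w] : w ∈ W_{s-1}}` for `s ≥ 1`. -/
def Wset (K : Type) [Field K] (d : ℕ) : ℕ → Set (F K d)
  | 0 => {f | ∃ i j k : Fin d, i ≤ j ∧ j ≤ k ∧ f = w K d i j k}
  | s + 1 => {f | ∃ g ∈ Wset K d s, ∃ i j : Fin d,
      f = y K d i * (x K d j * g - g * x K d j) -
        x K d i * (y K d j * g - g * y K d j)}

/-- The sets `Z_s`: `Z_0 = {z_{ijkl} : i ≤ j ≤ k ≤ l}` and
`Z_s = {y_i [x_j, z] - x_i [y_j, z] : z ∈ Z_{s-1}}` for `s ≥ 1`. -/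
def Zset (K : Type) [Field K] (d : ℕ) : ℕ → Set (F K d)
  | 0 => {f | ∃ i j k l : Fin d, i ≤ j ∧ j ≤ k ∧ k ≤ l ∧ f = z K d i j k l}
  | s + 1 => {f | ∃ g ∈ Zset K d s, ∃ i j : Fin d,
      f = y K d i * (x K d j * g - g * x K d j) -
        x K d i * (y K d j * g - g * y K d j)}


/-- Generators of `F`. -/
noncomputable def gn (K : Type) [Field K] (d : ℕ) (i : Fin d ⊕ Fin d) : F K d :=
  RingQuot.mkAlgHom K (grRel K d) (FreeAlgebra.ι K i)

/-- Commutator. -/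
def cm {R : Type} [Ring R] (a b : R) : R := a * b - b * a

/-- Product of commutators of generators. -/
noncomputable def pr (K : Type) [Field K] (d : ℕ) :
    List ((Fin d ⊕ Fin d) × (Fin d ⊕ Fin d)) → F K d
  | [] => 1
  | p :: L => cm (gn K d p.1) (gn K d p.2) * pr K d L

/-- Flattened list of letters. -/
def fl {α : Type} : List (α × α) → List α
  | [] => []
  | p :: L => p.1 :: p.2 :: fl L

lemma fl_length {α : Type} (L : List (α × α)) : (fl L).length = 2 * L.length := by
  induction L with
  | nil => rfl
  | cons p L ih => simp [fl, ih]; ring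

lemma central (K : Type) [Field K] (d : ℕ) (a b c : F K d) : cm a b * c = c * cm a b := by
  obtain ⟨a, rfl⟩ := RingQuot.mkAlgHom_surjective K (grRel K d) a
  obtain ⟨b, rfl⟩ := RingQuot.mkAlgHom_surjective K (grRel K d) b
  obtain ⟨c, rfl⟩ := RingQuot.mkAlgHom_surjective K (grRel K d) c
  have h : grRel K d ((a * b - b * a) * c - c * (a * b - b * a)) 0 := ⟨rfl, a, b, c, rfl⟩
  have := RingQuot.mkAlgHom_rel K h
  simp only [map_sub, map_mul, map_zero] at this
  exact sub_eq_zero.1 this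

lemma cm_neg {R : Type} [Ring R] (a b : R) : cm a b = - cm b a := by
  simp [cm]

lemma cm_self {R : Type} [Ring R] (a : R) : cm a a = 0 := by
  simp [cm]

lemma cm_mul' {R : Type} [Ring R] (hc : ∀ a b c : R, cm a b * c = c * cm a b) (u a b : R) :
    cm u (a * b) = a * cm u b + b * cm u a := by
  rw [← hc u a b]
  simp only [cm]
  noncomm_ring

lemma cm_cm' {R : Type} [Ring R] (hc : ∀ a b c : R, cm a b * c = c * cm a b) (a b c : R) :
    cm a b * cm a c = 0 := by
  have h1 : cm (cm b (a * c)) a = 0 := by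
    have := hc b (a * c) a
    rw [cm, this, sub_self]
  have h2 := hc b a a
  have h3 := hc b c a
  have h4 : cm (cm b (a * c)) a = cm b a * cm c a := by
    have e : cm b (a * c) = a * cm b c + cm b a * c := by simp only [cm]; noncomm_ring
    rw [e]
    have : cm (a * cm b c + cm b a * c) a
      = a * (cm b c * a - a * cm b c) + cm b a * (c * a - a * c)
        + (cm b a * a - a * cm b a) * c := by
      simp only [cm]; noncomm_ring
    rw [this, h2, h3]; simp [cm]
  rw [cm_neg a b, cm_neg a c, neg_mul_neg, ← h4, h1]

lemma swap_left {R : Type} [Ring R] (a b c : R) (h : cm b a * c = 0) : cm a b * c = 0 := by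
  rw [cm_neg, neg_mul, h, neg_zero]

lemma swap_right {R : Type} [Ring R] (a b c : R) (h : c * cm b a = 0) : c * cm a b = 0 := by
  rw [cm_neg, mul_neg, h, neg_zero]

lemma cm_mul (K : Type) [Field K] (d : ℕ) (u a b : F K d) :
    cm u (a * b) = a * cm u b + b * cm u a := cm_mul' (central K d) u a b

lemma cm_cm (K : Type) [Field K] (d : ℕ) (a b c : F K d) : cm a b * cm a c = 0 :=
  cm_cm' (central K d) a b c

lemma rep (K : Type) [Field K] (d : ℕ) (p q : Fin d ⊕ Fin d)
    (L : List ((Fin d ⊕ Fin d) × (Fin d ⊕ Fin d))) (h : p ∈ fl L) :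
    cm (gn K d p) (gn K d q) * pr K d L = 0 := by
  induction L with
  | nil => simp [fl] at h
  | cons r t ih =>
    simp only [fl, List.mem_cons] at h
    rw [pr, ← mul_assoc]
    rcases h with h | h | h
    · rw [← h, cm_cm, zero_mul]
    · rw [← h, swap_right _ _ _ (cm_cm K d _ _ _), zero_mul]
    · rw [central, mul_assoc, ih h, mul_zero]

lemma nodup (K : Type) [Field K] (d : ℕ)
    (L : List ((Fin d ⊕ Fin d) × (Fin d ⊕ Fin d))) (h : pr K d L ≠ 0) : (fl L).Nodup := by
  induction L with
  | nil => simp [fl]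
  | cons r t ih =>
    have ht : (fl t).Nodup := ih (fun h0 => h (by rw [pr, h0, mul_zero]))
    simp only [fl, List.nodup_cons, List.mem_cons, not_or]
    refine ⟨⟨fun e => h ?_, fun e => h ?_⟩, fun e => h ?_, ht⟩
    · rw [pr, e, cm_self, zero_mul]
    · rw [pr, rep K d _ _ _ e]
    · exact swap_left _ _ _ (rep K d _ _ _ e)

lemma pr_zero (K : Type) [Field K] (d : ℕ)
    (L : List ((Fin d ⊕ Fin d) × (Fin d ⊕ Fin d))) (h : d < L.length) : pr K d L = 0 := by
  by_contra h0
  have h1 := (nodup K d L h0).length_le_card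
  rw [fl_length] at h1
  simp at h1
  omega

/-- Left ideal generated by products of `n` commutators. -/
noncomputable def J (K : Type) [Field K] (d n : ℕ) : Ideal (F K d) :=
  Ideal.span {f | ∃ L, L.length = n ∧ f = pr K d L}

lemma J_zero (K : Type) [Field K] (d n : ℕ) (h : d < n) (f : F K d) (hf : f ∈ J K d n) :
    f = 0 := by
  have : J K d n ≤ ⊥ := by
    refine Ideal.span_le.2 ?_
    rintro _ ⟨L, hL, rfl⟩
    simpa using pr_zero K d L (by omega)
  simpa using this hf

lemma pr_central (K : Type) [Field K] (d : ℕ)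
    (L : List ((Fin d ⊕ Fin d) × (Fin d ⊕ Fin d))) (c : F K d) :
    pr K d L * c = c * pr K d L := by
  induction L with
  | nil => simp [pr]
  | cons r t ih => rw [pr, mul_assoc, ih, ← mul_assoc, central, mul_assoc]

lemma step0 (K : Type) [Field K] (d : ℕ) (u : Fin d ⊕ Fin d) (r : F K d)
    (L : List ((Fin d ⊕ Fin d) × (Fin d ⊕ Fin d))) :
    cm (gn K d u) r * pr K d L ∈ J K d (L.length + 1) := by
  obtain ⟨r, rfl⟩ := RingQuot.mkAlgHom_surjective K (grRel K d) r
  induction r using FreeAlgebra.induction with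
  | grade0 k =>
    have : cm (gn K d u) (RingQuot.mkAlgHom K (grRel K d) (algebraMap K _ k)) = 0 := by
      rw [AlgHom.commutes, cm, Algebra.commutes, sub_self]
    rw [this, zero_mul]
    exact zero_mem _
  | grade1 i => exact Ideal.subset_span ⟨(u, i) :: L, rfl, rfl⟩
  | mul a b ha hb =>
    rw [map_mul, cm_mul, add_mul, mul_assoc, mul_assoc]
    exact add_mem (Ideal.mul_mem_left _ _ hb) (Ideal.mul_mem_left _ _ ha)
  | add a b ha hb =>
    have : ∀ s t : F K d, cm (gn K d u) (s + t) = cm (gn K d u) s + cm (gn K d u) t := by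
      intro s t; simp only [cm]; noncomm_ring
    rw [map_add, this, add_mul]
    exact add_mem ha hb

lemma step (K : Type) [Field K] (d n : ℕ) (u : Fin d ⊕ Fin d) (g : F K d)
    (hg : g ∈ J K d n) : cm (gn K d u) g ∈ J K d (n + 1) := by
  suffices H : ∀ r : F K d, cm (gn K d u) (r * g) ∈ J K d (n + 1) by simpa using H 1
  have hg' : g ∈ Submodule.span (F K d) {f | ∃ L, L.length = n ∧ f = pr K d L} := hg
  induction hg' using Submodule.span_induction with
  | mem f hf =>
    obtain ⟨L, rfl, rfl⟩ := hf
    intro r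
    have : cm (gn K d u) (r * pr K d L) = cm (gn K d u) r * pr K d L := by
      simp only [cm, sub_mul, mul_assoc, pr_central]
    rw [this]
    exact step0 K d u r L
  | zero => intro r; simp [cm]
  | add a b ha hb iha ihb =>
    intro r
    have : cm (gn K d u) (r * (a + b)) = cm (gn K d u) (r * a) + cm (gn K d u) (r * b) := by
      simp only [cm]; noncomm_ring
    rw [this]
    exact add_mem (iha ha r) (ihb hb r)
  | smul c a ha iha =>
    intro r
    rw [smul_eq_mul, ← mul_assoc]
    exact iha ha _

lemma step2 (K : Type) [Field K] (d n : ℕ) (i j : Fin d) (g : F K d) (hg : g ∈ J K d n) :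
    y K d i * (x K d j * g - g * x K d j) - x K d i * (y K d j * g - g * y K d j)
      ∈ J K d (n + 1) :=
  sub_mem (Ideal.mul_mem_left _ _ (step K d n (Sum.inl j) g hg))
    (Ideal.mul_mem_left _ _ (step K d n (Sum.inr j) g hg))

lemma J0 (K : Type) [Field K] (d : ℕ) (g : F K d) : g ∈ J K d 0 := by
  have : (1 : F K d) ∈ J K d 0 := Ideal.subset_span ⟨[], rfl, rfl⟩
  simpa using Ideal.mul_mem_left _ g this

lemma W_mem (K : Type) [Field K] (d s : ℕ) : ∀ f ∈ Wset K d s, f ∈ J K d (s + 1) := by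
  induction s with
  | zero =>
    rintro _ ⟨i, j, k, -, -, rfl⟩
    exact step2 K d 0 i j _ (J0 K d _)
  | succ s ih =>
    rintro _ ⟨g, hg, i, j, rfl⟩
    exact step2 K d _ i j _ (ih g hg)

lemma Z_mem (K : Type) [Field K] (d s : ℕ) : ∀ f ∈ Zset K d s, f ∈ J K d (s + 1) := by
  induction s with
  | zero =>
    rintro _ ⟨i, j, k, l, -, -, -, rfl⟩
    exact step2 K d 0 i j _ (J0 K d _)
  | succ s ih =>
    rintro _ ⟨g, hg, i, j, rfl⟩
    exact step2 K d _ i j _ (ih g hg)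

/-- For every `s ≥ d`, every element of `W_s` and every element of `Z_s` is `0` in
`F`. -/
theorem stmt15 (K : Type) [Field K] [CharZero K] (d : ℕ) (hd : 1 ≤ d)
    (s : ℕ) (hs : d ≤ s) :
    (∀ f ∈ Wset K d s, f = 0) ∧ (∀ f ∈ Zset K d s, f = 0) := by
  exact ⟨fun f hf => J_zero K d _ (by omega) f (W_mem K d s f hf),
    fun f hf => J_zero K d _ (by omega) f (Z_mem K d s f hf)⟩

end Stmt15
end
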